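/- Let n ≥ 5. There is a constant C (depending only on n and η) such that for all x ∈ ℝ^{n-1}, all t ∈ ℝ, and all s ∈ (−1/10, 1/10), the inverse Fourier transform of the truncated surface measure satisfies |(σ_s^{(0)})^∨(x,t)| ≤ C(1+|t|)^{(2−n)/2}. -/

import Mathlib

open MeasureTheory Real FourierTransform Filter
open scoped ENNReal RealInnerProductSpace

noncomputable section

/-- `ℝⁿ = ℝ^{n-1} × ℝ`, realized as `EuclideanSpace ℝ (Fin (m+1))` with `m = n-1`
spatial coordinates and the last coordinate playing the role of time. -/
abbrev Spacetime (m : ℕ) := EuclideanSpace ℝ (Fin (m + 1))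

namespace Wave

variable {m : ℕ}

/-- The time coordinate `τ` of a point `z = (ξ, τ)`. -/
def timeCoord (z : Spacetime m) : ℝ := z (Fin.last m)

/-- `g(ξ,τ) = |ξ|² - τ²`, written using `|ξ|² = ‖z‖² - τ²`. -/
def waveSymbol (z : Spacetime m) : ℝ := ‖z‖ ^ 2 - 2 * timeCoord z ^ 2

/-- The canonical surface measure `σ_s` on the level set `g⁻¹(s)` of
`g(ξ,τ) = |ξ|² - τ²`: the `(n-1)`-dimensional Hausdorff measure restricted to
`g⁻¹(s)` (with the origin deleted). -/
def levelMeasure (m : ℕ) (s : ℝ) : Measure (Spacetime m) :=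
  (μH[(m : ℝ)]).restrict {z | waveSymbol z = s ∧ z ≠ 0}

/-- `(σ_s^{(0)})^∨(w)`: the inverse Fourier transform of the truncated surface measure
`σ_s^{(0)} = η σ_s`, evaluated at `w = (x,t)`. -/
def sigmaCheck (η : Spacetime m → ℝ) (s : ℝ) (w : Spacetime m) : ℂ :=
  ∫ z, (η z : ℂ) * Complex.exp (2 * (π : ℂ) * Complex.I * ((⟪z, w⟫ : ℝ) : ℂ))
    ∂(levelMeasure m s)

end Wave

open Wave

/-!
The equator `τ = 0` being null, `σ_s` lives on the two graphs `τ = ±√(|ξ|² - s)`, so that by the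
area formula the inverse Fourier transform is an integral over `ξ` whose integrand is radial up to
the character `e(ξ·x)`. Splitting `ξ` into its component `v` along `x` and a vector orthogonal to
`x`, and using `τ` instead of the length of the latter, leaves an integral over a bounded range of
`v` of
  `∫ (τ² - a)₊ ^ p φ(τ) cos(2πtτ) dτ`, where `a = v² - s` and `p = (n - 4) / 2`,
with `φ` smooth and compactly supported. These have to be `O((1 + |t|) ^ (-(p + 1)))` uniformly in
`a`, although for `a = 0` the two singularities `±√a` merge. Integrating by parts gains a factor
`1 / t` and lowers `p` by one. Once `0 < p < 1`, the singularity becomes `(τ² - a)₊ ^ (p - 1)`, but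
its amplitude is then `O(|τ| + |τ² - a|)`, that is, it vanishes where the singularities merge, and
splitting the integral at distance `1 / t` from `√a` gains the missing `t ^ (-p)`.
-/

/-! ### The area formula for graphs -/

theorem hausdorffMeasure_image_le_of_dist_le {X Y Z : Type*} [PseudoMetricSpace X]
    [MetricSpace Y] [MeasurableSpace Y] [BorelSpace Y]
    [MetricSpace Z] [MeasurableSpace Z] [BorelSpace Z]
    {A : X → Y} {B : X → Z} {S : Set X} {K : NNReal} {d : ℝ} (hd : 0 ≤ d)
    (h : ∀ y ∈ S, ∀ z ∈ S, dist (A y) (A z) ≤ K * dist (B y) (B z)) :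
    μH[d] (A '' S) ≤ (K : ℝ≥0∞) ^ d * μH[d] (B '' S) := by
  rcases S.eq_empty_or_nonempty with rfl | ⟨x, -⟩
  · simp
  have : Nonempty X := ⟨x⟩
  have hmem : ∀ w ∈ B '' S, Function.invFunOn B S w ∈ S ∧ B (Function.invFunOn B S w) = w :=
    fun w hw => ⟨Function.invFunOn_mem hw, Function.invFunOn_eq hw⟩
  have hlip : LipschitzOnWith K (A ∘ Function.invFunOn B S) (B '' S) := by
    refine LipschitzOnWith.of_dist_le_mul fun u hu v hv => ?_
    have := h _ (hmem u hu).1 _ (hmem v hv).1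
    rwa [(hmem u hu).2, (hmem v hv).2] at this
  refine le_trans (measure_mono ?_) (hlip.hausdorffMeasure_image_le hd)
  rintro _ ⟨y, hy, rfl⟩
  refine ⟨B y, ⟨y, hy, rfl⟩, ?_⟩
  have hB := hmem (B y) ⟨y, hy, rfl⟩
  have := h _ hB.1 _ hy
  rw [hB.2, dist_self, mul_zero] at this
  exact dist_le_zero.1 this

theorem measure_restrict_le_of_locally {X : Type*} [TopologicalSpace X]
    [SecondCountableTopology X] [MeasurableSpace X] [BorelSpace X] {μ ν : Measure X} {U : Set X}
    (hU : IsOpen U)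
    (h : ∀ x ∈ U, ∃ W ∈ nhds x, ∀ S ⊆ W, MeasurableSet S → μ S ≤ ν S) :
    μ.restrict U ≤ ν.restrict U := by
  choose! W hW hle using h
  obtain ⟨t, htU, htc, hcov⟩ := TopologicalSpace.countable_cover_nhdsWithin
    (f := fun x => interior (W x)) (s := U)
    (fun x hx => mem_nhdsWithin_of_mem_nhds (interior_mem_nhds.2 (hW x hx)))
  rcases t.eq_empty_or_nonempty with rfl | hne
  · have : U = ∅ := by simpa using hcov
    simp [this]
  obtain ⟨e, rfl⟩ := htc.exists_eq_range hne
  let D : ℕ → Set X := disjointed fun i => interior (W (e i))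
  have hDm : ∀ i, MeasurableSet (D i) := fun i =>
    MeasurableSet.disjointed (fun j => isOpen_interior.measurableSet) i
  have hDU : ⋃ i, D i = ⋃ i, interior (W (e i)) := iUnion_disjointed
  refine Measure.le_iff.2 fun S hS => ?_
  rw [Measure.restrict_apply hS, Measure.restrict_apply hS]
  have hSU : S ∩ U = ⋃ i, (S ∩ U ∩ D i) := by
    rw [← Set.inter_iUnion, hDU]
    refine (Set.inter_eq_left.2 fun x hx => ?_).symm
    simpa using hcov hx.2
  have hm : ∀ i, MeasurableSet (S ∩ U ∩ D i) := fun i => (hS.inter hU.measurableSet).inter (hDm i)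
  have hd : Pairwise (Function.onFun Disjoint fun i => S ∩ U ∩ D i) := fun i j hij =>
    (disjoint_disjointed _ hij).mono Set.inter_subset_right Set.inter_subset_right
  rw [hSU, measure_iUnion hd hm, measure_iUnion hd hm]
  refine ENNReal.tsum_le_tsum fun i => hle (e i) (htU ⟨i, rfl⟩) _ ?_ (hm i)
  exact Set.inter_subset_right.trans ((disjointed_subset _ i).trans interior_subset)

theorem measure_le_of_forall_one_add_pow_smul_le {X : Type*} [MeasurableSpace X]
    {μ ν : Measure X} (k : ℕ)
    (h : ∀ ε : ℝ, 0 < ε → μ ≤ ENNReal.ofReal (1 + ε) ^ k • ν) : μ ≤ ν := by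
  refine Measure.le_iff.2 fun S _ => ?_
  have hlim : Tendsto (fun ε : ℝ => ENNReal.ofReal (1 + ε) ^ k * ν S) (nhdsWithin 0 (Set.Ioi 0))
      (nhds (1 * ν S)) := by
    refine ENNReal.Tendsto.mul_const ?_ (Or.inl one_ne_zero)
    have : Continuous fun ε : ℝ => ENNReal.ofReal (1 + ε) ^ k :=
      (ENNReal.continuous_pow k).comp (ENNReal.continuous_ofReal.comp (by fun_prop))
    simpa using (this.tendsto 0).mono_left nhdsWithin_le_nhds
  rw [one_mul] at hlim
  refine ge_of_tendsto hlim ?_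
  filter_upwards [self_mem_nhdsWithin] with ε hε
  simpa using h ε hε S

theorem measure_restrict_le_of_locally_one_add_pow {X : Type*} [TopologicalSpace X]
    [SecondCountableTopology X] [MeasurableSpace X] [BorelSpace X] {μ ν : Measure X} {U : Set X}
    (hU : IsOpen U) (k : ℕ)
    (h : ∀ ε : ℝ, 0 < ε → ∀ x ∈ U, ∃ W ∈ nhds x, ∀ S ⊆ W, MeasurableSet S →
      μ S ≤ ENNReal.ofReal (1 + ε) ^ k * ν S) :
    μ.restrict U ≤ ν.restrict U := by
  refine measure_le_of_forall_one_add_pow_smul_le k fun ε hε => ?_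
  rw [← Measure.restrict_smul]
  exact measure_restrict_le_of_locally hU (h ε hε)

theorem eventually_le_one_add_mul {X : Type*} [TopologicalSpace X] {q : X → ℝ} {x : X}
    (hq : ContinuousAt q x) (hx : 0 < q x) {ε : ℝ} (hε : 0 < ε) :
    ∀ᶠ y in nhds x, q y ≤ (1 + ε) * q x ∧ q x ≤ (1 + ε) * q y := by
  have hlt : q x < (1 + ε) * q x := by nlinarith
  filter_upwards [hq.eventually_lt_const hlt, (hq.const_mul (1 + ε)).eventually_const_lt hlt]
    with y h₁ h₂ using ⟨h₁.le, h₂.le⟩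

theorem le_one_add_mul_of_sq_eq_add_sq {A B p a b ε : ℝ} (hB : 0 ≤ B) (hε : 0 ≤ ε)
    (hA2 : A ^ 2 = p ^ 2 + a ^ 2) (hB2 : B ^ 2 = p ^ 2 + b ^ 2) (hab : |a - b| ≤ ε * p) :
    A ≤ (1 + ε) * B := by
  have hpB : p ≤ B := (abs_le_of_sq_le_sq' (by nlinarith) hB).2
  have hbB : |b| ≤ B := abs_le_of_sq_le_sq (by nlinarith) hB
  have hc : |a - b| ≤ ε * B := hab.trans (mul_le_mul_of_nonneg_left hpB hε)
  have hsq : (a - b) ^ 2 ≤ (ε * B) ^ 2 :=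
    sq_le_sq' (neg_le_of_abs_le hc) (le_of_abs_le hc)
  have hcross : b * (a - b) ≤ B * (ε * B) := by
    calc b * (a - b) ≤ |b| * |a - b| := (le_abs_self _).trans_eq (abs_mul _ _)
      _ ≤ B * (ε * B) := mul_le_mul hbB hc (abs_nonneg _) hB
  refine (abs_le_of_sq_le_sq' ?_ (by positivity)).2
  calc A ^ 2 = B ^ 2 + 2 * (b * (a - b)) + (a - b) ^ 2 := by rw [hA2, hB2]; ring
    _ ≤ B ^ 2 + 2 * (B * (ε * B)) + (ε * B) ^ 2 := by gcongr
    _ = ((1 + ε) * B) ^ 2 := by ring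

/-- `Γ` has the metric behaviour of the graph map `y ↦ (y, f y)` into an `ℓ²` product. -/
def IsGraphMap {X E : Type*} [PseudoMetricSpace X] [PseudoMetricSpace E] (Γ : X → E)
    (f : X → ℝ) : Prop :=
  ∀ y z, dist (Γ y) (Γ z) ^ 2 = dist y z ^ 2 + (f y - f z) ^ 2

theorem IsGraphMap.hausdorffMeasure_image_le {X E E' : Type*} [PseudoMetricSpace X]
    [MetricSpace E] [MeasurableSpace E] [BorelSpace E]
    [MetricSpace E'] [MeasurableSpace E'] [BorelSpace E']
    {Γ : X → E} {Γ' : X → E'} {f f' : X → ℝ} (hΓ : IsGraphMap Γ f) (hΓ' : IsGraphMap Γ' f')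
    {S : Set X} {ε : ℝ} (hε : 0 ≤ ε)
    (h : ∀ y ∈ S, ∀ z ∈ S, |f y - f z - (f' y - f' z)| ≤ ε * dist y z) (d : ℕ) :
    μH[(d : ℝ)] (Γ '' S) ≤ ENNReal.ofReal (1 + ε) ^ d * μH[(d : ℝ)] (Γ' '' S) := by
  rw [← ENNReal.rpow_natCast]
  refine hausdorffMeasure_image_le_of_dist_le d.cast_nonneg fun y hy z hz => ?_
  rw [Real.coe_toNNReal _ (by positivity)]
  exact le_one_add_mul_of_sq_eq_add_sq dist_nonneg hε (hΓ y z) (hΓ' y z) (h y hy z hz)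

section Graph

variable {V : Type*} [NormedAddCommGroup V] [InnerProductSpace ℝ V]

/-- The stretch of `V` along `g` by the factor `√(1 + ‖g‖²)`, a linear model inside `V` itself of
the graph of `v ↦ ⟪g, v⟫`. -/
def gradientStretch (g : V) : V →ₗ[ℝ] V :=
  LinearMap.transvection (innerₗ V g) ((1 + √(1 + ‖g‖ ^ 2))⁻¹ • g)

theorem norm_gradientStretch_sq (g v : V) :
    ‖gradientStretch g v‖ ^ 2 = ‖v‖ ^ 2 + ⟪g, v⟫ ^ 2 := by
  have happly : gradientStretch g v = v + (⟪g, v⟫ * (1 + √(1 + ‖g‖ ^ 2))⁻¹) • g := by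
    simp [gradientStretch, LinearMap.transvection, smul_smul]
  rw [happly, norm_add_sq_real, norm_smul, inner_smul_right, real_inner_comm, mul_pow,
    Real.norm_eq_abs, sq_abs]
  have hq : √(1 + ‖g‖ ^ 2) ^ 2 = 1 + ‖g‖ ^ 2 := Real.sq_sqrt (by positivity)
  have hg : ‖g‖ ^ 2 = √(1 + ‖g‖ ^ 2) ^ 2 - 1 := by linarith
  have hq1 : 1 + √(1 + ‖g‖ ^ 2) ≠ 0 := by positivity
  generalize √(1 + ‖g‖ ^ 2) = q at *
  rw [hg]
  field_simp
  ring

theorem isGraphMap_gradientStretch (g : V) : IsGraphMap (gradientStretch g) fun v => ⟪g, v⟫ :=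
  fun y z => by rw [dist_eq_norm, dist_eq_norm, ← map_sub, norm_gradientStretch_sq, inner_sub_right]

variable [FiniteDimensional ℝ V]

theorem det_gradientStretch (g : V) :
    LinearMap.det (gradientStretch g) = √(1 + ‖g‖ ^ 2) := by
  rw [gradientStretch, LinearMap.transvection.det]
  simp only [innerₗ_apply_apply, inner_smul_right, real_inner_self_eq_norm_sq]
  have hq : √(1 + ‖g‖ ^ 2) ^ 2 = 1 + ‖g‖ ^ 2 := Real.sq_sqrt (by positivity)
  have hg : ‖g‖ ^ 2 = √(1 + ‖g‖ ^ 2) ^ 2 - 1 := by linarith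
  have hq1 : 1 + √(1 + ‖g‖ ^ 2) ≠ 0 := by positivity
  generalize √(1 + ‖g‖ ^ 2) = q at *
  rw [hg]
  field_simp
  ring

variable [MeasurableSpace V] [BorelSpace V]

theorem hausdorffMeasure_image_gradientStretch (g : V) (S : Set V) :
    μH[(Module.finrank ℝ V : ℝ)] (gradientStretch g '' S) =
      ENNReal.ofReal √(1 + ‖g‖ ^ 2) * μH[(Module.finrank ℝ V : ℝ)] S := by
  have : (μH[(Module.finrank ℝ V : ℝ)] : Measure V).IsAddHaarMeasure :=
    isAddHaarMeasure_hausdorffMeasure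
  rw [Measure.addHaar_image_linearMap, det_gradientStretch, abs_of_nonneg (Real.sqrt_nonneg _)]

variable {E : Type*} [MetricSpace E] [MeasurableSpace E] [BorelSpace E]

namespace IsGraphMap

variable {Γ : V → E} {f : V → ℝ} {grad : V → V} {U : Set V}

theorem exists_nhds_hausdorffMeasure_image_le_and_ge (hΓ : IsGraphMap Γ f) {x : V}
    (hf : HasStrictFDerivAt f (innerSL ℝ (grad x)) x) (hgrad : ContinuousAt grad x)
    {ε : ℝ} (hε : 0 < ε) :
    ∃ W ∈ nhds x, ∀ S ⊆ W, MeasurableSet S →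
      μH[(Module.finrank ℝ V : ℝ)] (Γ '' S) ≤ ENNReal.ofReal (1 + ε) ^ (Module.finrank ℝ V + 1) *
        ∫⁻ y in S, ENNReal.ofReal √(1 + ‖grad y‖ ^ 2) ∂μH[(Module.finrank ℝ V : ℝ)] ∧
      ∫⁻ y in S, ENNReal.ofReal √(1 + ‖grad y‖ ^ 2) ∂μH[(Module.finrank ℝ V : ℝ)] ≤
        ENNReal.ofReal (1 + ε) ^ (Module.finrank ℝ V + 1) *
          μH[(Module.finrank ℝ V : ℝ)] (Γ '' S) := by
  set d := Module.finrank ℝ V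
  let q : V → ℝ := fun y => √(1 + ‖grad y‖ ^ 2)
  have hdensity := eventually_le_one_add_mul (q := q)
    (continuousAt_const.add (hgrad.norm.pow 2)).sqrt (Real.sqrt_pos.2 (by positivity)) hε
  have hlin := hf.isLittleO.def hε
  rw [nhds_prod_eq] at hlin
  obtain ⟨W, hW, hflat⟩ := Filter.eventually_prod_self_iff'.1 hlin
  refine ⟨W ∩ {y | q y ≤ (1 + ε) * q x ∧ q x ≤ (1 + ε) * q y}, inter_mem hW hdensity,
    fun S hS hSm => ?_⟩
  have hcmp : ∀ y ∈ S, ∀ z ∈ S, |f y - f z - (⟪grad x, y⟫ - ⟪grad x, z⟫)| ≤ ε * dist y z :=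
    fun y hy z hz => by
      simpa [dist_eq_norm, inner_sub_right] using hflat y (hS hy).1 z (hS hz).1
  have hstretch : μH[(d : ℝ)] (gradientStretch (grad x) '' S) =
      ∫⁻ _ in S, ENNReal.ofReal (q x) ∂μH[(d : ℝ)] := by
    rw [hausdorffMeasure_image_gradientStretch, setLIntegral_const]
  have hmul : ∀ r : ℝ, ENNReal.ofReal ((1 + ε) * r) = ENNReal.ofReal (1 + ε) * ENNReal.ofReal r :=
    fun r => ENNReal.ofReal_mul (by positivity)
  rw [pow_succ]
  constructor
  · refine (hΓ.hausdorffMeasure_image_le (isGraphMap_gradientStretch (grad x)) hε.le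
      hcmp d).trans ?_
    rw [hstretch, mul_assoc,
      ← lintegral_const_mul' (ENNReal.ofReal (1 + ε)) _ ENNReal.ofReal_ne_top]
    exact mul_le_mul_right (setLIntegral_mono' hSm fun y hy =>
      (ENNReal.ofReal_le_ofReal (hS hy).2.2).trans_eq (hmul _)) _
  · have hback := (isGraphMap_gradientStretch (grad x)).hausdorffMeasure_image_le hΓ hε.le
      (fun y hy z hz => by rw [abs_sub_comm]; exact hcmp y hy z hz) d
    rw [mul_comm (_ ^ d), mul_assoc]
    refine le_trans ?_ (mul_le_mul_right hback (ENNReal.ofReal (1 + ε)))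
    rw [hstretch, ← lintegral_const_mul' (ENNReal.ofReal (1 + ε)) _ ENNReal.ofReal_ne_top]
    exact setLIntegral_mono' hSm fun y hy =>
      (ENNReal.ofReal_le_ofReal (hS hy).2.1).trans_eq (hmul _)

theorem hausdorffMeasure_restrict_image (hΓ : IsGraphMap Γ f) (hΓm : MeasurableEmbedding Γ)
    (hU : IsOpen U) (hf : ∀ x ∈ U, HasStrictFDerivAt f (innerSL ℝ (grad x)) x)
    (hgrad : ContinuousOn grad U) :
    μH[(Module.finrank ℝ V : ℝ)].restrict (Γ '' U) =
      Measure.map Γ ((μH[(Module.finrank ℝ V : ℝ)].restrict U).withDensity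
        fun y => ENNReal.ofReal √(1 + ‖grad y‖ ^ 2)) := by
  set d := Module.finrank ℝ V
  let q : V → ℝ≥0∞ := fun y => ENNReal.ofReal √(1 + ‖grad y‖ ^ 2)
  have hcomap : (Measure.comap Γ μH[(d : ℝ)]).restrict U =
      (μH[(d : ℝ)].withDensity q).restrict U := by
    refine le_antisymm ?_ ?_ <;>
      refine measure_restrict_le_of_locally_one_add_pow hU (d + 1) fun ε hε x hx => ?_ <;>
      obtain ⟨W, hW, h⟩ := hΓ.exists_nhds_hausdorffMeasure_image_le_and_ge (hf x hx)
        (hgrad.continuousAt (hU.mem_nhds hx)) hε <;>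
      refine ⟨W, hW, fun S hS hSm => ?_⟩ <;>
      rw [hΓm.comap_apply, withDensity_apply _ hSm]
    exacts [(h S hS hSm).1, (h S hS hSm).2]
  rw [← restrict_withDensity hU.measurableSet, ← hcomap]
  ext S hS
  rw [Measure.map_apply hΓm.measurable hS, Measure.restrict_apply (hΓm.measurable hS),
    Measure.restrict_apply hS, hΓm.comap_apply, Set.inter_comm, Set.inter_comm _ U,
    Set.image_inter_preimage]

end IsGraphMap

end Graph

/-! ### One-dimensional oscillatory integrals -/

/-- The truncated power `u₊ ^ p`, with value `0` at every `u ≤ 0`, also when `p ≤ 0`. -/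
def truncRpow (p u : ℝ) : ℝ := if 0 < u then u ^ p else 0

theorem truncRpow_of_pos {p u : ℝ} (hu : 0 < u) : truncRpow p u = u ^ p := if_pos hu

theorem truncRpow_of_nonpos {p u : ℝ} (hu : u ≤ 0) : truncRpow p u = 0 := if_neg hu.not_gt

theorem truncRpow_nonneg (p u : ℝ) : 0 ≤ truncRpow p u := by
  unfold truncRpow
  split_ifs with h
  exacts [(rpow_pos_of_pos h p).le, le_rfl]

theorem measurable_truncRpow (p : ℝ) : Measurable (truncRpow p) :=
  Measurable.ite measurableSet_Ioi (measurable_id.pow_const p) measurable_const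

theorem continuous_truncRpow {p : ℝ} (hp : 0 < p) : Continuous (truncRpow p) := by
  have hmax : truncRpow p = fun u => (max u 0) ^ p := by
    ext u
    rcases lt_or_ge 0 u with hu | hu
    · rw [truncRpow_of_pos hu, max_eq_left hu.le]
    · rw [truncRpow_of_nonpos hu, max_eq_right hu, zero_rpow hp.ne']
  rw [hmax]
  exact (continuous_id.max continuous_const).rpow_const fun _ => Or.inr hp.le

theorem hasDerivAt_truncRpow (p : ℝ) {u : ℝ} (hu : u ≠ 0) :
    HasDerivAt (truncRpow p) (p * truncRpow (p - 1) u) u := by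
  rcases hu.lt_or_gt with h | h
  · rw [truncRpow_of_nonpos h.le, mul_zero]
    refine (hasDerivAt_const u (0 : ℝ)).congr_of_eventuallyEq ?_
    filter_upwards [Iio_mem_nhds h] with v hv using truncRpow_of_nonpos (le_of_lt hv)
  · rw [truncRpow_of_pos h]
    refine (Real.hasDerivAt_rpow_const (Or.inl h.ne')).congr_of_eventuallyEq ?_
    filter_upwards [Ioi_mem_nhds h] with v hv using truncRpow_of_pos hv

theorem truncRpow_sub_one_mul_self (p u : ℝ) : truncRpow (p - 1) u * u = truncRpow p u := by
  unfold truncRpow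
  split_ifs with h
  · rw [rpow_sub_one h.ne', div_mul_cancel₀ _ h.ne']
  · exact zero_mul u

theorem truncRpow_le {p u R : ℝ} (hp : 0 ≤ p) (hR : 0 ≤ R) (hu : u ≤ R) :
    truncRpow p u ≤ R ^ p := by
  rcases lt_or_ge 0 u with h | h
  · rw [truncRpow_of_pos h]
    exact rpow_le_rpow h.le hu hp
  · rw [truncRpow_of_nonpos h]
    positivity

/-- The oscillatory integral of frequency `t` and phase shift `θ` with amplitude
`(τ² - a)₊ ^ p φ(τ)`. -/
def oscInt (p a : ℝ) (φ : ℝ → ℝ) (t θ : ℝ) : ℝ :=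
  ∫ τ, truncRpow p (τ ^ 2 - a) * φ τ * cos (t * τ + θ)

/-- The amplitude obtained from `φ` when `(τ² - a)₊ ^ p φ(τ)` is differentiated and
`(τ² - a)₊ ^ (p - 1)` is factored out. -/
def lowered (p a : ℝ) (φ : ℝ → ℝ) (τ : ℝ) : ℝ := 2 * p * τ * φ τ + (τ ^ 2 - a) * deriv φ τ

theorem hasDerivAt_truncRpow_mul (p a : ℝ) {φ : ℝ → ℝ} {τ : ℝ} (hφ : DifferentiableAt ℝ φ τ)
    (hτ : τ ^ 2 - a ≠ 0) :
    HasDerivAt (fun τ => truncRpow p (τ ^ 2 - a) * φ τ)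
      (truncRpow (p - 1) (τ ^ 2 - a) * lowered p a φ τ) τ := by
  have hsq : HasDerivAt (fun τ : ℝ => τ ^ 2 - a) (2 * τ) τ := by
    simpa using (hasDerivAt_pow 2 τ).sub_const a
  refine (((hasDerivAt_truncRpow p hτ).comp τ hsq).mul hφ.hasDerivAt).congr_deriv ?_
  simp only [Function.comp, lowered, ← truncRpow_sub_one_mul_self p]
  ring

theorem hasDerivAt_sin_mul_add (t θ τ : ℝ) :
    HasDerivAt (fun τ => sin (t * τ + θ)) (t * cos (t * τ + θ)) τ := by
  simpa [mul_comm] using (((hasDerivAt_id τ).const_mul t).add_const θ).sin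

theorem countable_setOf_sq_sub_eq_zero (a : ℝ) : {τ : ℝ | τ ^ 2 - a = 0}.Countable := by
  refine Set.Countable.mono (s₂ := {√a, -√a}) (fun τ hτ => ?_) (by simp)
  have h : τ ^ 2 = a := sub_eq_zero.1 hτ
  have hsq : τ ^ 2 = √a ^ 2 := by rw [Real.sq_sqrt (h ▸ sq_nonneg τ), h]
  simpa using sq_eq_sq_iff_eq_or_eq_neg.1 hsq

theorem integrable_mul_cos {f : ℝ → ℝ} {μ : Measure ℝ} (hf : Integrable f μ) (t θ : ℝ) :
    Integrable (fun τ => f τ * cos (t * τ + θ)) μ :=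
  hf.mul_bdd (c := 1) (by fun_prop) (ae_of_all _ fun τ => by
    simpa using abs_cos_le_one (t * τ + θ))

theorem integrable_mul_sin {f : ℝ → ℝ} {μ : Measure ℝ} (hf : Integrable f μ) (t θ : ℝ) :
    Integrable (fun τ => f τ * sin (t * τ + θ)) μ :=
  hf.mul_bdd (c := 1) (by fun_prop) (ae_of_all _ fun τ => by
    simpa using abs_sin_le_one (t * τ + θ))

theorem hasCompactSupport_of_forall_lt_abs {f : ℝ → ℝ} {L : ℝ} (hf : ∀ τ, L < |τ| → f τ = 0) :
    HasCompactSupport f :=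
  HasCompactSupport.intro (isCompact_Icc (a := -L) (b := L)) fun τ hτ =>
    hf τ (not_le.1 fun h => hτ (abs_le.1 h))

theorem deriv_eq_zero_of_forall_lt_abs {f : ℝ → ℝ} {L τ : ℝ} (hf : ∀ τ, L < |τ| → f τ = 0)
    (hτ : L < |τ|) : deriv f τ = 0 := by
  have hev : f =ᶠ[nhds τ] fun _ => 0 :=
    eventually_of_mem ((isOpen_lt continuous_const continuous_abs).mem_nhds hτ) hf
  rw [hev.deriv_eq, deriv_const]

theorem integral_mul_cos_eq_of_hasDerivAt_off_countable {F G : ℝ → ℝ} {D : Set ℝ} {L : ℝ}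
    (hD : D.Countable) (hFc : Continuous F) (hF : ∀ τ ∉ D, HasDerivAt F (G τ) τ)
    (hG : Integrable G) (hF0 : ∀ τ, L < |τ| → F τ = 0) (hG0 : ∀ τ, L < |τ| → G τ = 0)
    {t : ℝ} (ht : t ≠ 0) (θ : ℝ) :
    ∫ τ, F τ * cos (t * τ + θ) = -t⁻¹ * ∫ τ, G τ * sin (t * τ + θ) := by
  have hFi : Integrable F :=
    hFc.integrable_of_hasCompactSupport (hasCompactSupport_of_forall_lt_abs hF0)
  have hcos := (integrable_mul_cos hFi t θ).const_mul t
  have hsin := integrable_mul_sin hG t θ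
  have hR : L < |L| + 1 := by linarith [le_abs_self L]
  have hsupp : (Function.support fun τ => G τ * sin (t * τ + θ) + t * (F τ * cos (t * τ + θ))) ⊆
      Set.Ioc (-(|L| + 1)) (|L| + 1) := by
    intro τ hτ
    have h : |τ| ≤ L := not_lt.1 fun h => hτ (by simp [hF0 τ h, hG0 τ h])
    exact ⟨(abs_lt.1 (h.trans_lt hR)).1, ((abs_lt.1 (h.trans_lt hR)).2).le⟩
  have hFTC := integral_eq_of_hasDerivAt_off_countable_of_le
    (fun τ => F τ * sin (t * τ + θ)) (fun τ => G τ * sin (t * τ + θ) + t * (F τ * cos (t * τ + θ)))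
    (a := -(|L| + 1)) (b := |L| + 1) (by linarith [abs_nonneg L]) hD
    (hFc.mul (by fun_prop)).continuousOn
    (fun τ hτ => ((hF τ hτ.2).mul (hasDerivAt_sin_mul_add t θ τ)).congr_deriv (by ring))
    (hsin.add hcos).intervalIntegrable
  have habs : |(|L| + 1)| = |L| + 1 := abs_of_pos (by positivity)
  rw [hF0 _ (by rwa [habs]), hF0 _ (by rwa [abs_neg, habs]),
    intervalIntegral.integral_eq_integral_of_support_subset hsupp, integral_add hsin hcos,
    integral_const_mul] at hFTC
  field_simp
  linarith

theorem oscInt_eq_neg_inv_mul_oscInt_lowered {p a L t : ℝ} {φ : ℝ → ℝ} (hp : 0 < p)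
    (hφ : Differentiable ℝ φ) (hφ0 : ∀ τ, L < |τ| → φ τ = 0) (ht : t ≠ 0) (θ : ℝ)
    (hint : Integrable fun τ => truncRpow (p - 1) (τ ^ 2 - a) * lowered p a φ τ) :
    oscInt p a φ t θ = -t⁻¹ * oscInt (p - 1) a (lowered p a φ) t (θ - π / 2) := by
  have hcont : Continuous fun τ => truncRpow p (τ ^ 2 - a) * φ τ :=
    ((continuous_truncRpow hp).comp (by fun_prop)).mul hφ.continuous
  simp only [oscInt, ← add_sub_assoc, cos_sub_pi_div_two]
  exact integral_mul_cos_eq_of_hasDerivAt_off_countable (countable_setOf_sq_sub_eq_zero a) hcont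
    (fun τ hτ => hasDerivAt_truncRpow_mul p a hφ.differentiableAt hτ) hint
    (fun τ hτ => by rw [hφ0 τ hτ, mul_zero])
    (fun τ hτ => by simp [lowered, hφ0 τ hτ, deriv_eq_zero_of_forall_lt_abs hφ0 hτ]) ht θ

theorem abs_truncRpow_mul_le {p a A L M : ℝ} {φ : ℝ → ℝ} (hp : 0 ≤ p) (ha : |a| ≤ A)
    (hM : ∀ τ, |φ τ| ≤ M) (hφ0 : ∀ τ, L < |τ| → φ τ = 0) (τ : ℝ) :
    |truncRpow p (τ ^ 2 - a) * φ τ| ≤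
      (Set.Icc (-L) L).indicator (fun _ => (L ^ 2 + A) ^ p * M) τ := by
  by_cases hτ : τ ∈ Set.Icc (-L) L
  · have hA : 0 ≤ A := (abs_nonneg a).trans ha
    rw [Set.indicator_of_mem hτ, abs_mul, abs_of_nonneg (truncRpow_nonneg _ _)]
    refine mul_le_mul (truncRpow_le hp (by positivity) ?_) (hM τ) (abs_nonneg _) (by positivity)
    linarith [sq_le_sq' hτ.1 hτ.2, neg_le_of_abs_le ha]
  · rw [Set.indicator_of_notMem hτ, hφ0 τ (not_le.1 fun h => hτ (abs_le.1 h)), mul_zero, abs_zero]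

theorem integrable_truncRpow_mul {p a L : ℝ} {φ : ℝ → ℝ} (hp : 0 ≤ p) (hφ : Continuous φ)
    (hφ0 : ∀ τ, L < |τ| → φ τ = 0) :
    Integrable fun τ => truncRpow p (τ ^ 2 - a) * φ τ := by
  obtain ⟨M, hM⟩ :=
    hφ.bounded_above_of_compact_support (hasCompactSupport_of_forall_lt_abs hφ0)
  have hm : Measurable fun τ : ℝ => truncRpow p (τ ^ 2 - a) :=
    (measurable_truncRpow p).comp (by fun_prop)
  exact (continuous_const.integrableOn_Icc.integrable_indicator measurableSet_Icc).mono'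
    (hm.mul hφ.measurable).aestronglyMeasurable
    (ae_of_all _ (abs_truncRpow_mul_le hp le_rfl hM hφ0))

theorem abs_oscInt_le {p a A L M : ℝ} {φ : ℝ → ℝ} (hp : 0 ≤ p) (ha : |a| ≤ A)
    (hM : ∀ τ, |φ τ| ≤ M) (hφ0 : ∀ τ, L < |τ| → φ τ = 0) (t θ : ℝ) :
    |oscInt p a φ t θ| ≤ volume.real (Set.Icc (-L) L) * ((L ^ 2 + A) ^ p * M) := by
  have hi : Integrable ((Set.Icc (-L) L).indicator fun _ => (L ^ 2 + A) ^ p * M) :=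
    continuous_const.integrableOn_Icc.integrable_indicator measurableSet_Icc
  rw [oscInt, ← Real.norm_eq_abs, ← smul_eq_mul, ← integral_indicator_const _ measurableSet_Icc]
  refine norm_integral_le_of_norm_le hi (ae_of_all _ fun τ => ?_)
  rw [norm_mul]
  exact (mul_le_of_le_one_right (norm_nonneg _) (abs_cos_le_one _)).trans
    (abs_truncRpow_mul_le hp ha hM hφ0 τ)

theorem integral_Ioi_comp_sub (g : ℝ → ℝ) (u c : ℝ) :
    ∫ y in Set.Ioi c, g (y - u) = ∫ y in Set.Ioi (c - u), g y := by
  rw [← (measurePreserving_sub_right volume u).setIntegral_preimage_emb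
    (measurableEmbedding_subRight u) g, Set.preimage_sub_const_Ioi, sub_add_cancel]

theorem integrableOn_Ioi_comp_sub_iff {g : ℝ → ℝ} {u c : ℝ} :
    IntegrableOn (fun y => g (y - u)) (Set.Ioi c) ↔ IntegrableOn g (Set.Ioi (c - u)) := by
  rw [← (measurePreserving_sub_right volume u).integrableOn_comp_preimage (f := g)
    (measurableEmbedding_subRight u), Set.preimage_sub_const_Ioi, sub_add_cancel]
  rfl

theorem abs_integral_Ioi_mul_cos_le {f : ℝ → ℝ} {u t : ℝ} (ht : 0 < t) (θ : ℝ)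
    (hfc : ContinuousWithinAt f (Set.Ioi u) u) (hf : ∀ y ∈ Set.Ioi u, DifferentiableAt ℝ f y)
    (hfi : IntegrableOn f (Set.Ioi u)) (hf'i : IntegrableOn (deriv f) (Set.Ioi u)) :
    |∫ y in Set.Ioi u, f y * cos (t * y + θ)| ≤ t⁻¹ * (|f u| + ∫ y in Set.Ioi u, |deriv f y|) := by
  have hderiv : ∀ y ∈ Set.Ioi u, HasDerivAt f (deriv f y) y := fun y hy => (hf y hy).hasDerivAt
  have hlim : Tendsto f atTop (nhds 0) :=
    tendsto_zero_of_hasDerivAt_of_integrableOn_Ioi hderiv hf'i hfi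
  have hparts := integral_Ioi_mul_deriv_eq_deriv_mul (a := u) hderiv
    (fun y _ => hasDerivAt_sin_mul_add t θ y)
    (((integrable_mul_cos hfi t θ).const_mul t).congr (ae_of_all _ fun y => mul_left_comm _ _ _))
    (integrable_mul_sin hf'i t θ)
    (hfc.mul (g := fun y => sin (t * y + θ)) (by fun_prop))
    (hlim.zero_mul_isBoundedUnder_le
      (isBoundedUnder_of ⟨1, fun y => abs_sin_le_one (t * y + θ)⟩))
  simp only [mul_left_comm (f _) t, integral_const_mul] at hparts
  have hsin : ∀ r x : ℝ, |r * sin x| ≤ |r| := fun r x => by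
    rw [abs_mul]
    exact mul_le_of_le_one_right (abs_nonneg r) (abs_sin_le_one x)
  rw [(eq_inv_mul_iff_mul_eq₀ ht.ne').2 hparts, abs_mul, abs_of_pos (inv_pos.2 ht), zero_sub]
  refine mul_le_mul_of_nonneg_left ((abs_sub _ _).trans (add_le_add ?_ ?_)) (inv_pos.2 ht).le
  · rw [abs_neg]
    exact hsin _ _
  · rw [← Real.norm_eq_abs]
    exact norm_integral_le_of_norm_le hf'i.norm (ae_of_all _ fun y => hsin _ _)

section Singular

variable {f : ℝ → ℝ} {p M u δ : ℝ}

theorem integral_Ioc_sub_rpow (hp : 0 < p) (hδ : 0 ≤ δ) :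
    ∫ y in Set.Ioc u (u + δ), (y - u) ^ (p - 1) = δ ^ p / p := by
  rw [← intervalIntegral.integral_of_le (by linarith),
    intervalIntegral.integral_comp_sub_right (fun y => y ^ (p - 1)),
    integral_rpow (Or.inl (by linarith))]
  simp [zero_rpow hp.ne']

theorem integrableOn_Ioc_sub_rpow (hp : 0 < p) (hδ : 0 ≤ δ) :
    IntegrableOn (fun y => (y - u) ^ (p - 1)) (Set.Ioc u (u + δ)) := by
  rw [← intervalIntegrable_iff_integrableOn_Ioc_of_le (by linarith)]
  simpa [add_comm] using (intervalIntegral.intervalIntegrable_rpow' (a := 0) (b := δ)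
    (by linarith : -1 < p - 1)).comp_sub_right u

theorem abs_setIntegral_Ioc_mul_cos_le (hp : 0 < p) (hδ : 0 ≤ δ) (t θ : ℝ)
    (hM : ∀ y ∈ Set.Ioc u (u + δ), |f y| ≤ M * (y - u) ^ (p - 1)) :
    |∫ y in Set.Ioc u (u + δ), f y * cos (t * y + θ)| ≤ M * (δ ^ p / p) := by
  rw [← integral_Ioc_sub_rpow hp hδ, ← integral_const_mul, ← Real.norm_eq_abs]
  refine norm_integral_le_of_norm_le ((integrableOn_Ioc_sub_rpow hp hδ).const_mul M) ?_
  filter_upwards [ae_restrict_mem measurableSet_Ioc] with y hy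
  rw [norm_mul]
  exact (mul_le_of_le_one_right (norm_nonneg _) (abs_cos_le_one _)).trans (hM y hy)

theorem integral_Ioi_sub_rpow (hp : p < 1) (hδ : 0 < δ) :
    ∫ y in Set.Ioi (u + δ), (y - u) ^ (p - 2) = δ ^ (p - 1) / (1 - p) := by
  rw [integral_Ioi_comp_sub (fun y => y ^ (p - 2)), add_sub_cancel_left,
    integral_Ioi_rpow_of_lt (by linarith) hδ, ← neg_div_neg_eq]
  ring_nf

theorem integrableOn_Ioi_sub_rpow (hp : p < 1) (hδ : 0 < δ) :
    IntegrableOn (fun y => (y - u) ^ (p - 2)) (Set.Ioi (u + δ)) := by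
  rw [integrableOn_Ioi_comp_sub_iff (g := fun y => y ^ (p - 2)), add_sub_cancel_left]
  exact integrableOn_Ioi_rpow_of_lt (by linarith) hδ

theorem abs_integral_Ioi_mul_cos_le_of_singular {t : ℝ} (hp0 : 0 < p) (hp1 : p < 1) (ht : 0 < t)
    (θ : ℝ) (hf : ∀ y ∈ Set.Ioi u, DifferentiableAt ℝ f y) (hfi : IntegrableOn f (Set.Ioi u))
    (hM : ∀ y ∈ Set.Ioi u, |f y| ≤ M * (y - u) ^ (p - 1))
    (hM' : ∀ y ∈ Set.Ioi u, |deriv f y| ≤ M * (y - u) ^ (p - 2)) :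
    |∫ y in Set.Ioi u, f y * cos (t * y + θ)| ≤ (1 / p + 1 + 1 / (1 - p)) * M * t ^ (-p) := by
  set δ := t⁻¹ with hδ_def
  have hδ : 0 < δ := inv_pos.2 ht
  have hsub : Set.Ioi (u + δ) ⊆ Set.Ioi u := Set.Ioi_subset_Ioi (by linarith)
  have hmem : u + δ ∈ Set.Ioi u := lt_add_of_pos_right u hδ
  have hcos : IntegrableOn (fun y => f y * cos (t * y + θ)) (Set.Ioi u) :=
    integrable_mul_cos hfi t θ
  have hbound : ∀ᵐ y ∂volume.restrict (Set.Ioi (u + δ)), |deriv f y| ≤ M * (y - u) ^ (p - 2) :=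
    (ae_restrict_mem measurableSet_Ioi).mono fun y hy => hM' y (hsub hy)
  have hpow := (integrableOn_Ioi_sub_rpow (u := u) hp1 hδ).const_mul M
  have hf'i : IntegrableOn (deriv f) (Set.Ioi (u + δ)) :=
    hpow.mono' (measurable_deriv f).aestronglyMeasurable hbound
  have hnear := abs_setIntegral_Ioc_mul_cos_le hp0 hδ.le t θ fun y hy => hM y hy.1
  have hfar := abs_integral_Ioi_mul_cos_le ht θ (hf _ hmem).continuousAt.continuousWithinAt
    (fun y hy => hf y (hsub hy)) (hfi.mono_set hsub) hf'i
  have hend : |f (u + δ)| ≤ M * δ ^ (p - 1) := by simpa using hM _ hmem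
  have htail : ∫ y in Set.Ioi (u + δ), |deriv f y| ≤ M * (δ ^ (p - 1) / (1 - p)) := by
    rw [← integral_Ioi_sub_rpow hp1 hδ, ← integral_const_mul]
    exact integral_mono_ae hf'i.norm hpow hbound
  have hδp : δ * δ ^ (p - 1) = δ ^ p := by rw [rpow_sub_one hδ.ne', mul_div_cancel₀ _ hδ.ne']
  rw [← Set.Ioc_union_Ioi_eq_Ioi hmem.le, setIntegral_union (Set.Ioc_disjoint_Ioi le_rfl)
    measurableSet_Ioi (hcos.mono_set Set.Ioc_subset_Ioi_self) (hcos.mono_set hsub)]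
  calc _ ≤ M * (δ ^ p / p) + δ * (M * δ ^ (p - 1) + M * (δ ^ (p - 1) / (1 - p))) :=
        (abs_add_le _ _).trans (add_le_add hnear (hfar.trans (by gcongr)))
    _ = (1 / p + 1 + 1 / (1 - p)) * M * (δ * δ ^ (p - 1)) := by rw [← hδp]; ring
    _ = _ := by rw [hδp, hδ_def, inv_rpow ht.le, rpow_neg ht.le]

end Singular

theorem sub_sqrt_mul_le_sq_sub {a τ : ℝ} (hτ : √a < τ) : (τ - √a) * τ ≤ τ ^ 2 - a := by
  have h := Real.sqrt_nonneg a
  rcases le_or_gt 0 a with ha | ha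
  · nlinarith [Real.sq_sqrt ha]
  · rw [Real.sqrt_eq_zero_of_nonpos ha.le]
    nlinarith

theorem sq_sub_pos_of_sqrt_lt {a τ : ℝ} (hτ : √a < τ) : 0 < τ ^ 2 - a :=
  sub_pos.2 ((Real.sqrt_lt' ((Real.sqrt_nonneg a).trans_lt hτ)).1 hτ)

theorem rpow_sub_mul_rpow_le {D y τ p k : ℝ} (hy : 0 < y) (hτ : 0 < τ) (hD : y * τ ≤ D)
    (hpk : p ≤ k) : D ^ (p - k) * τ ^ k ≤ y ^ (p - k) * τ ^ p := by
  calc D ^ (p - k) * τ ^ k ≤ (y * τ) ^ (p - k) * τ ^ k := by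
        gcongr ?_ * _
        exact rpow_le_rpow_of_nonpos (by positivity) hD (by linarith)
    _ = y ^ (p - k) * (τ ^ (p - k) * τ ^ k) := by rw [mul_rpow hy.le hτ.le, mul_assoc]
    _ = y ^ (p - k) * τ ^ p := by rw [← rpow_add hτ, sub_add_cancel]

theorem rpow_le_of_le_of_one_le {x p R : ℝ} (hx : 0 ≤ x) (hp0 : 0 ≤ p) (hp1 : p ≤ 1)
    (hR : 1 ≤ R) (hxR : x ≤ R) : x ^ p ≤ R :=
  (rpow_le_rpow hx hxR hp0).trans (rpow_le_self_of_one_le hR hp1)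

section TipBounds

variable {p y τ D R N c c' : ℝ} (hp0 : 0 < p) (hp1 : p < 1) (hR : 1 ≤ R) (hy : 0 < y)
  (hyτ : y ≤ τ) (hτR : τ ≤ R) (hD : y * τ ≤ D)
include hp0 hp1 hR hy hyτ hτR hD

theorem rpow_sub_one_mul_le_mul_rpow : D ^ (p - 1) * τ ≤ R * y ^ (p - 1) := by
  have hτ : 0 < τ := hy.trans_le hyτ
  have h := rpow_sub_mul_rpow_le hy hτ hD hp1.le
  rw [rpow_one] at h
  calc D ^ (p - 1) * τ ≤ y ^ (p - 1) * τ ^ p := h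
    _ ≤ y ^ (p - 1) * R := by
        gcongr
        exact rpow_le_of_le_of_one_le hτ.le hp0.le hp1.le hR hτR
    _ = _ := mul_comm _ _

theorem abs_rpow_sub_one_mul_le (hDR : D ≤ R) (hc : |c| ≤ N * (τ + D)) (hN : 0 ≤ N) :
    |D ^ (p - 1) * c| ≤ 2 * R * N * y ^ (p - 1) := by
  have hD0 : 0 < D := (mul_pos hy (hy.trans_le hyτ)).trans_le hD
  have hD' : D ^ (p - 1) * D ≤ R * y ^ (p - 1) := by
    calc D ^ (p - 1) * D = D ^ p := by rw [rpow_sub_one hD0.ne', div_mul_cancel₀ _ hD0.ne']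
      _ ≤ R ^ p := rpow_le_rpow hD0.le hDR hp0.le
      _ = R * R ^ (p - 1) := by rw [rpow_sub_one (by positivity)]; field_simp
      _ ≤ R * y ^ (p - 1) := by
          gcongr ?_ * ?_
          exact rpow_le_rpow_of_nonpos hy (hyτ.trans hτR) (by linarith)
  calc |D ^ (p - 1) * c| = D ^ (p - 1) * |c| := by rw [abs_mul, abs_of_pos (rpow_pos_of_pos hD0 _)]
    _ ≤ D ^ (p - 1) * (N * (τ + D)) := by gcongr
    _ = N * (D ^ (p - 1) * τ + D ^ (p - 1) * D) := by ring
    _ ≤ N * (R * y ^ (p - 1) + R * y ^ (p - 1)) :=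
        mul_le_mul_of_nonneg_left
          (add_le_add (rpow_sub_one_mul_le_mul_rpow hp0 hp1 hR hy hyτ hτR hD) hD') hN
    _ = _ := by ring

theorem rpow_sub_two_mul_sq_le : D ^ (p - 2) * τ ^ 2 ≤ R * y ^ (p - 2) := by
  have hτ : 0 < τ := hy.trans_le hyτ
  have h := rpow_sub_mul_rpow_le hy hτ hD (by linarith : p ≤ 2)
  rw [rpow_two] at h
  calc D ^ (p - 2) * τ ^ 2 ≤ y ^ (p - 2) * τ ^ p := h
    _ ≤ y ^ (p - 2) * R := by
        gcongr
        exact rpow_le_of_le_of_one_le hτ.le hp0.le hp1.le hR hτR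
    _ = _ := mul_comm _ _

theorem rpow_sub_one_le_mul_rpow : D ^ (p - 1) ≤ R * y ^ (p - 2) := by
  calc D ^ (p - 1) ≤ (y * y) ^ (p - 1) :=
        rpow_le_rpow_of_nonpos (by positivity)
          ((mul_le_mul_of_nonneg_left hyτ hy.le).trans hD) (by linarith)
    _ = y ^ p * y ^ (p - 2) := by
        rw [mul_rpow hy.le hy.le, ← rpow_add hy, ← rpow_add hy]
        ring_nf
    _ ≤ R * y ^ (p - 2) := by
        gcongr
        exact rpow_le_of_le_of_one_le hy.le hp0.le hp1.le hR (hyτ.trans hτR)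

theorem abs_rpow_sub_two_mul_le (hc : |c| ≤ N * (τ + D)) (hc' : |c'| ≤ N) :
    |D ^ (p - 2) * (2 * (p - 1) * τ * c + D * c')| ≤ 5 * R ^ 2 * N * y ^ (p - 2) := by
  have hτ : 0 < τ := hy.trans_le hyτ
  have hD0 : 0 < D := (mul_pos hy hτ).trans_le hD
  have hN : 0 ≤ N := (abs_nonneg _).trans hc'
  have hsq := rpow_sub_two_mul_sq_le hp0 hp1 hR hy hyτ hτR hD
  have hmul : D ^ (p - 1) * τ ≤ R ^ 2 * y ^ (p - 2) := by
    calc D ^ (p - 1) * τ ≤ R * y ^ (p - 2) * R :=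
          mul_le_mul (rpow_sub_one_le_mul_rpow hp0 hp1 hR hy hyτ hτR hD) hτR hτ.le (by positivity)
      _ = _ := by ring
  have hone := rpow_sub_one_le_mul_rpow hp0 hp1 hR hy hyτ hτR hD
  have hpow : D ^ (p - 2) * D = D ^ (p - 1) := by
    rw [← rpow_add_one hD0.ne']
    ring_nf
  have habs : |2 * (p - 1) * τ * c + D * c'| ≤ 2 * τ * (N * (τ + D)) + D * N := by
    refine (abs_add_le _ _).trans (add_le_add ?_ ?_)
    · rw [abs_mul, abs_mul, abs_mul, abs_two, abs_of_pos hτ, abs_of_neg (by linarith : p - 1 < 0)]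
      exact mul_le_mul (by nlinarith) hc (abs_nonneg _) (by positivity)
    · rw [abs_mul, abs_of_pos hD0]
      gcongr
  calc _ = D ^ (p - 2) * |2 * (p - 1) * τ * c + D * c'| := by
        rw [abs_mul, abs_of_pos (rpow_pos_of_pos hD0 _)]
    _ ≤ D ^ (p - 2) * (2 * τ * (N * (τ + D)) + D * N) := by gcongr
    _ = N * (2 * (D ^ (p - 2) * τ ^ 2) + 2 * (D ^ (p - 1) * τ) + D ^ (p - 1)) := by
        rw [← hpow]; ring
    _ ≤ N * (2 * (R * y ^ (p - 2)) + 2 * (R ^ 2 * y ^ (p - 2)) + R * y ^ (p - 2)) := by gcongr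
    _ = (3 * R + 2 * R ^ 2) * (N * y ^ (p - 2)) := by ring
    _ ≤ 5 * R ^ 2 * (N * y ^ (p - 2)) := by
        gcongr
        nlinarith
    _ = _ := by ring

end TipBounds

theorem integrableOn_Ioi_of_abs_le {f : ℝ → ℝ} {p u M R : ℝ} (hp : 0 < p) (hu : 0 ≤ u)
    (hR : 0 ≤ R) (hf : Measurable f) (hM : ∀ y ∈ Set.Ioi u, |f y| ≤ M * (y - u) ^ (p - 1))
    (hf0 : ∀ y, R < y → f y = 0) : IntegrableOn f (Set.Ioi u) := by
  have hnear : IntegrableOn f (Set.Ioc u (u + R)) :=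
    ((integrableOn_Ioc_sub_rpow hp hR).const_mul M).mono' hf.aestronglyMeasurable
      ((ae_restrict_mem measurableSet_Ioc).mono fun y hy => hM y hy.1)
  refine hnear.of_forall_sdiff_eq_zero measurableSet_Ioi fun y hy => hf0 y ?_
  have h : u + R < y := not_le.1 fun h => hy.2 ⟨hy.1, h⟩
  linarith

/-- Uniform size bounds for an amplitude to be integrated against `(τ² - a)₊ ^ (p - 1)` with
`0 < p < 1`. The factor `|τ| + |τ² - a|` makes up for the degeneration of `τ² - a` at its zero
`√a` as `a → 0`, where a simple zero turns into a double one. -/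
structure VanishesAtTip (a N R : ℝ) (ψ : ℝ → ℝ) : Prop where
  differentiable : Differentiable ℝ ψ
  abs_le : ∀ τ, |ψ τ| ≤ N * (|τ| + |τ ^ 2 - a|)
  abs_deriv_le : ∀ τ, |deriv ψ τ| ≤ N
  eq_zero : ∀ τ, R < |τ| ∨ R < τ ^ 2 - a → ψ τ = 0

namespace VanishesAtTip

variable {a N R : ℝ} {ψ : ℝ → ℝ}

theorem deriv_eq_zero (h : VanishesAtTip a N R ψ) {τ : ℝ} (hτ : R < |τ| ∨ R < τ ^ 2 - a) :
    deriv ψ τ = 0 := by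
  have hopen : IsOpen {τ : ℝ | R < |τ| ∨ R < τ ^ 2 - a} :=
    (isOpen_lt continuous_const continuous_abs).union
      (isOpen_lt continuous_const ((continuous_pow 2).sub continuous_const))
  have hev : ψ =ᶠ[nhds τ] fun _ => 0 :=
    eventually_of_mem (hopen.mem_nhds hτ) h.eq_zero
  rw [hev.deriv_eq, deriv_const]

theorem comp_neg (h : VanishesAtTip a N R ψ) : VanishesAtTip a N R fun τ => ψ (-τ) where
  differentiable := h.differentiable.comp differentiable_neg
  abs_le τ := by simpa using h.abs_le (-τ)
  abs_deriv_le τ := by simpa [deriv_comp_neg] using h.abs_deriv_le (-τ)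
  eq_zero τ hτ := h.eq_zero (-τ) (by simpa using hτ)

variable {p : ℝ} (hp0 : 0 < p) (hp1 : p < 1) (hR : 1 ≤ R) (h : VanishesAtTip a N R ψ)
include hp0 hp1 hR h

theorem abs_truncRpow_mul_le {y : ℝ} (hy : √a < y) :
    |truncRpow (p - 1) (y ^ 2 - a) * ψ y| ≤ 5 * R ^ 2 * N * (y - √a) ^ (p - 1) := by
  have hN : 0 ≤ N := (abs_nonneg _).trans (h.abs_deriv_le 0)
  have hy0 : 0 < y := (Real.sqrt_nonneg a).trans_lt hy
  have hD := sq_sub_pos_of_sqrt_lt hy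
  have hpow : 0 ≤ (y - √a) ^ (p - 1) := (rpow_pos_of_pos (sub_pos.2 hy) _).le
  by_cases hout : R < |y| ∨ R < y ^ 2 - a
  · rw [h.eq_zero y hout, mul_zero, abs_zero]
    exact mul_nonneg (by positivity) hpow
  rw [not_or, not_lt, not_lt, abs_of_pos hy0] at hout
  rw [truncRpow_of_pos hD]
  refine (abs_rpow_sub_one_mul_le hp0 hp1 hR (sub_pos.2 hy) (by linarith [Real.sqrt_nonneg a])
    hout.1 (sub_sqrt_mul_le_sq_sub hy) hout.2 ?_ hN).trans ?_
  · simpa [abs_of_pos hy0, abs_of_pos hD] using h.abs_le y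
  · gcongr
    exacts [by norm_num, le_self_pow₀ hR two_ne_zero]

theorem abs_deriv_truncRpow_mul_le {y : ℝ} (hy : √a < y) :
    |deriv (fun y => truncRpow (p - 1) (y ^ 2 - a) * ψ y) y| ≤
      5 * R ^ 2 * N * (y - √a) ^ (p - 2) := by
  have hN : 0 ≤ N := (abs_nonneg _).trans (h.abs_deriv_le 0)
  have hy0 : 0 < y := (Real.sqrt_nonneg a).trans_lt hy
  have hD := sq_sub_pos_of_sqrt_lt hy
  have hpow : 0 ≤ (y - √a) ^ (p - 2) := (rpow_pos_of_pos (sub_pos.2 hy) _).le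
  rw [(hasDerivAt_truncRpow_mul (p - 1) a h.differentiable.differentiableAt hD.ne').deriv,
    lowered, truncRpow_of_pos hD, (by ring : p - 1 - 1 = p - 2)]
  by_cases hout : R < |y| ∨ R < y ^ 2 - a
  · rw [h.eq_zero y hout, h.deriv_eq_zero hout, mul_zero, mul_zero, add_zero, mul_zero, abs_zero]
    exact mul_nonneg (by positivity) hpow
  rw [not_or, not_lt, not_lt, abs_of_pos hy0] at hout
  refine abs_rpow_sub_two_mul_le hp0 hp1 hR (sub_pos.2 hy) (by linarith [Real.sqrt_nonneg a])
    hout.1 (sub_sqrt_mul_le_sq_sub hy) ?_ (h.abs_deriv_le y)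
  simpa [abs_of_pos hy0, abs_of_pos hD] using h.abs_le y

theorem integrableOn_Ioi_sqrt :
    IntegrableOn (fun y => truncRpow (p - 1) (y ^ 2 - a) * ψ y) (Set.Ioi √a) :=
  integrableOn_Ioi_of_abs_le (R := R) hp0 (Real.sqrt_nonneg a) (by linarith)
    (((measurable_truncRpow _).comp (by fun_prop)).mul h.differentiable.continuous.measurable)
    (fun _ hy => abs_truncRpow_mul_le hp0 hp1 hR h hy)
    fun y hy => by rw [h.eq_zero y (Or.inl (hy.trans_le (le_abs_self y))), mul_zero]

theorem abs_integral_Ioi_sqrt_le {t : ℝ} (ht : 0 < t) (θ : ℝ) :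
    |∫ y in Set.Ioi √a, truncRpow (p - 1) (y ^ 2 - a) * ψ y * cos (t * y + θ)| ≤
      (1 / p + 1 + 1 / (1 - p)) * (5 * R ^ 2 * N) * t ^ (-p) :=
  abs_integral_Ioi_mul_cos_le_of_singular hp0 hp1 ht θ
    (fun _ hy => (hasDerivAt_truncRpow_mul (p - 1) a h.differentiable.differentiableAt
      (sq_sub_pos_of_sqrt_lt hy).ne').differentiableAt)
    (integrableOn_Ioi_sqrt hp0 hp1 hR h)
    (fun _ hy => abs_truncRpow_mul_le hp0 hp1 hR h hy)
    (fun _ hy => abs_deriv_truncRpow_mul_le hp0 hp1 hR h hy)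

end VanishesAtTip

section Halves

variable {g : ℝ → ℝ} {u : ℝ} (hg0 : ∀ y, 0 < |y| → |y| ≤ u → g y = 0)
  (hg : IntegrableOn g (Set.Ioi u)) (hg' : IntegrableOn (fun y => g (-y)) (Set.Ioi u))

include hg0

theorem integrableOn_Ioi_zero_of_eq_zero (hg : IntegrableOn g (Set.Ioi u)) :
    IntegrableOn g (Set.Ioi 0) :=
  hg.of_forall_sdiff_eq_zero measurableSet_Ioi fun y ⟨(hy : 0 < y), hyu⟩ =>
    hg0 y (abs_pos.2 hy.ne') (by rwa [abs_of_pos hy, ← not_lt])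

theorem setIntegral_Ioi_zero_of_eq_zero (hu : 0 ≤ u) :
    ∫ y in Set.Ioi 0, g y = ∫ y in Set.Ioi u, g y :=
  setIntegral_eq_of_subset_of_forall_sdiff_eq_zero measurableSet_Ioi (Set.Ioi_subset_Ioi hu)
    fun y ⟨(hy : 0 < y), hyu⟩ => hg0 y (abs_pos.2 hy.ne') (by rwa [abs_of_pos hy, ← not_lt])

include hg hg'

theorem integrable_of_integrableOn_Ioi_comp_neg : Integrable g := by
  have hneg := integrableOn_Ioi_zero_of_eq_zero (g := fun y => g (-y))
    (fun y hy hyu => hg0 (-y) (by rwa [abs_neg]) (by rwa [abs_neg])) hg'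
  rw [← integrableOn_univ, ← Set.Iic_union_Ioi (a := (0 : ℝ))]
  refine IntegrableOn.union ?_ (integrableOn_Ioi_zero_of_eq_zero hg0 hg)
  rwa [← (Measure.measurePreserving_neg volume).integrableOn_comp_preimage
    (MeasurableEquiv.neg ℝ).measurableEmbedding, Set.neg_preimage, Set.neg_Iic, neg_zero,
    integrableOn_Ici_iff_integrableOn_Ioi]

theorem integral_eq_integral_Ioi_add_integral_Ioi_comp_neg (hu : 0 ≤ u) :
    ∫ y, g y = (∫ y in Set.Ioi u, g y) + ∫ y in Set.Ioi u, g (-y) := by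
  have hi := integrable_of_integrableOn_Ioi_comp_neg hg0 hg hg'
  rw [← setIntegral_Ioi_zero_of_eq_zero hg0 hu,
    ← setIntegral_Ioi_zero_of_eq_zero (g := fun y => g (-y))
      (fun y hy hyu => hg0 (-y) (by rwa [abs_neg]) (by rwa [abs_neg])) hu,
    integral_comp_neg_Ioi, neg_zero, add_comm,
    intervalIntegral.integral_Iic_add_Ioi hi.integrableOn hi.integrableOn]

end Halves

theorem sq_sub_nonpos_of_abs_le_sqrt {a τ : ℝ} (hτ : 0 < |τ|) (h : |τ| ≤ √a) : τ ^ 2 - a ≤ 0 := by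
  rw [← sq_abs, sub_nonpos]
  exact (Real.le_sqrt' hτ).1 h

theorem VanishesAtTip.integrable_truncRpow_mul {a N p R : ℝ} {ψ : ℝ → ℝ} (hp0 : 0 < p)
    (hp1 : p < 1) (hR : 1 ≤ R) (h : VanishesAtTip a N R ψ) :
    Integrable fun τ => truncRpow (p - 1) (τ ^ 2 - a) * ψ τ := by
  refine integrable_of_integrableOn_Ioi_comp_neg (u := √a) (fun y hy hya => ?_)
    (integrableOn_Ioi_sqrt hp0 hp1 hR h)
    (by simpa only [neg_sq] using integrableOn_Ioi_sqrt hp0 hp1 hR h.comp_neg)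
  rw [truncRpow_of_nonpos (sq_sub_nonpos_of_abs_le_sqrt hy hya), zero_mul]

theorem oscInt_eq_integral_Ioi_sqrt_add {p a : ℝ} {φ : ℝ → ℝ} (t θ : ℝ)
    (hi : Integrable fun τ => truncRpow p (τ ^ 2 - a) * φ τ) :
    oscInt p a φ t θ =
      (∫ τ in Set.Ioi √a, truncRpow p (τ ^ 2 - a) * φ τ * cos (t * τ + θ)) +
        ∫ τ in Set.Ioi √a, truncRpow p (τ ^ 2 - a) * φ (-τ) * cos (t * τ + -θ) := by
  have hcos := integrable_mul_cos hi t θ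
  rw [oscInt, integral_eq_integral_Ioi_add_integral_Ioi_comp_neg (u := √a) (fun y hy hya => ?_)
    hcos.integrableOn hcos.comp_neg.integrableOn (Real.sqrt_nonneg a)]
  · congr 2 with τ
    rw [neg_sq, ← cos_neg (t * -τ + θ)]
    ring_nf
  · rw [truncRpow_of_nonpos (sq_sub_nonpos_of_abs_le_sqrt hy hya), zero_mul, zero_mul]

theorem VanishesAtTip.abs_oscInt_le {a N p R t : ℝ} {ψ : ℝ → ℝ} (hp0 : 0 < p)
    (hp1 : p < 1) (hR : 1 ≤ R) (h : VanishesAtTip a N R ψ) (ht : 0 < t) (θ : ℝ) :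
    |oscInt (p - 1) a ψ t θ| ≤
      2 * ((1 / p + 1 + 1 / (1 - p)) * (5 * R ^ 2 * N)) * t ^ (-p) := by
  rw [oscInt_eq_integral_Ioi_sqrt_add t θ (h.integrable_truncRpow_mul hp0 hp1 hR), mul_assoc,
    two_mul]
  exact (abs_add_le _ _).trans (add_le_add (abs_integral_Ioi_sqrt_le hp0 hp1 hR h ht θ)
    (abs_integral_Ioi_sqrt_le hp0 hp1 hR h.comp_neg ht (-θ)))

theorem abs_setIntegral_mul_cos_le_of_vanish {φ : ℝ → ℝ} {u L M t : ℝ} (hφ : ContDiff ℝ 1 φ)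
    (hM : ∀ τ, |φ τ| ≤ M) (hM' : ∀ τ, |deriv φ τ| ≤ M) (hφ0 : ∀ τ, L < |τ| → φ τ = 0) (ht : 0 < t)
    (θ : ℝ) :
    |∫ τ in Set.Ioi u, φ τ * cos (t * τ + θ)| ≤
      t⁻¹ * (M + volume.real (Set.Icc (-L) L) * M) := by
  have hφi : Integrable φ :=
    hφ.continuous.integrable_of_hasCompactSupport (hasCompactSupport_of_forall_lt_abs hφ0)
  have hφ'i : Integrable (deriv φ) :=
    (hφ.continuous_deriv le_rfl).integrable_of_hasCompactSupport
      (hasCompactSupport_of_forall_lt_abs fun _ => deriv_eq_zero_of_forall_lt_abs hφ0)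
  have hderiv : ∫ y in Set.Ioi u, |deriv φ y| ≤ volume.real (Set.Icc (-L) L) * M := by
    refine (setIntegral_le_integral hφ'i.norm (ae_of_all _ fun y => norm_nonneg _)).trans ?_
    rw [← smul_eq_mul, ← integral_indicator_const _ measurableSet_Icc]
    refine integral_mono hφ'i.norm
      (continuous_const.integrableOn_Icc.integrable_indicator measurableSet_Icc) fun y => ?_
    refine Set.le_indicator (fun y _ => hM' y) (fun y hy => ?_) y
    rw [deriv_eq_zero_of_forall_lt_abs hφ0 (not_le.1 fun h => hy (abs_le.1 h)), abs_zero]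
  refine (abs_integral_Ioi_mul_cos_le ht θ hφ.continuous.continuousWithinAt
    (fun y _ => (hφ.differentiable one_ne_zero) y) hφi.integrableOn hφ'i.integrableOn).trans ?_
  gcongr
  exact hM u

theorem abs_oscInt_zero_le {φ : ℝ → ℝ} {L M t : ℝ} (a : ℝ) (hφ : ContDiff ℝ 1 φ)
    (hM : ∀ τ, |φ τ| ≤ M) (hM' : ∀ τ, |deriv φ τ| ≤ M) (hφ0 : ∀ τ, L < |τ| → φ τ = 0) (ht : 0 < t)
    (θ : ℝ) :
    |oscInt 0 a φ t θ| ≤ 2 * (M + volume.real (Set.Icc (-L) L) * M) * t⁻¹ := by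
  have hone : ∀ (ψ : ℝ → ℝ) (θ : ℝ), ∫ τ in Set.Ioi √a, truncRpow 0 (τ ^ 2 - a) * ψ τ *
      cos (t * τ + θ) = ∫ τ in Set.Ioi √a, ψ τ * cos (t * τ + θ) := fun ψ θ =>
    setIntegral_congr_fun measurableSet_Ioi fun τ hτ => by
      simp only [truncRpow_of_pos (sq_sub_pos_of_sqrt_lt hτ), rpow_zero, one_mul]
  rw [oscInt_eq_integral_Ioi_sqrt_add t θ (integrable_truncRpow_mul le_rfl hφ.continuous hφ0),
    hone, hone fun τ => φ (-τ), mul_assoc, two_mul, mul_comm _ t⁻¹]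
  exact (abs_add_le _ _).trans (add_le_add
    (abs_setIntegral_mul_cos_le_of_vanish hφ hM hM' hφ0 ht θ)
    (abs_setIntegral_mul_cos_le_of_vanish (φ := fun τ => φ (-τ)) (hφ.comp contDiff_neg)
      (fun τ => hM (-τ)) (fun τ => by simpa [deriv_comp_neg] using hM' (-τ))
      (fun τ hτ => hφ0 (-τ) (by rwa [abs_neg])) ht (-θ)))

/-- Smooth families of amplitudes which, for the parameters in `K`, are supported in a fixed
interval `[-L, L]`. -/
structure IsAmplitude {P : Type*} [NormedAddCommGroup P] [NormedSpace ℝ P] (K : Set P) (L : ℝ)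
    (Φ : P → ℝ → ℝ) : Prop where
  contDiff : ContDiff ℝ (⊤ : ℕ∞) (Function.uncurry Φ)
  eq_zero : ∀ q ∈ K, ∀ τ, L < |τ| → Φ q τ = 0

namespace IsAmplitude

variable {P : Type*} [NormedAddCommGroup P] [NormedSpace ℝ P] {K : Set P} {L : ℝ}
  {Φ : P → ℝ → ℝ} {a : P → ℝ}

theorem contDiff_apply (hΦ : IsAmplitude K L Φ) (q : P) : ContDiff ℝ (⊤ : ℕ∞) (Φ q) :=
  hΦ.contDiff.comp (contDiff_const.prodMk contDiff_id)

protected theorem deriv (hΦ : IsAmplitude K L Φ) : IsAmplitude K L fun q => deriv (Φ q) where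
  contDiff := by
    have h : ContDiff ℝ (⊤ : ℕ∞) (Function.uncurry fun z : P × ℝ => Φ z.1) :=
      hΦ.contDiff.comp ((contDiff_fst.comp contDiff_fst).prodMk contDiff_snd)
    exact h.fderiv_apply contDiff_snd contDiff_const le_rfl
  eq_zero q hq _ hτ := deriv_eq_zero_of_forall_lt_abs (hΦ.eq_zero q hq) hτ

protected theorem lowered (hΦ : IsAmplitude K L Φ) (ha : ContDiff ℝ (⊤ : ℕ∞) a) (p : ℝ) :
    IsAmplitude K L fun q => lowered p (a q) (Φ q) where
  contDiff := by
    have ha' : ContDiff ℝ (⊤ : ℕ∞) fun z : P × ℝ => a z.1 := ha.comp contDiff_fst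
    exact ((contDiff_const.mul contDiff_snd).mul hΦ.contDiff).add
      (((contDiff_snd.pow 2).sub ha').mul hΦ.deriv.contDiff)
  eq_zero q hq τ hτ := by
    rw [lowered, hΦ.eq_zero q hq τ hτ, hΦ.deriv.eq_zero q hq τ hτ]
    ring

theorem exists_abs_le (hΦ : IsAmplitude K L Φ) (hK : IsCompact K) :
    ∃ M, 0 ≤ M ∧ ∀ q ∈ K, ∀ τ, |Φ q τ| ≤ M := by
  obtain ⟨M, hM⟩ := (hK.prod (isCompact_Icc (a := -L) (b := L))).exists_bound_of_continuousOn
    hΦ.contDiff.continuous.continuousOn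
  refine ⟨max M 0, le_max_right _ _, fun q hq τ => ?_⟩
  by_cases hτ : |τ| ≤ L
  · exact (hM (q, τ) ⟨hq, abs_le.1 hτ⟩).trans (le_max_left _ _)
  · rw [hΦ.eq_zero q hq τ (not_le.1 hτ), abs_zero]
    exact le_max_right _ _

theorem exists_vanishesAtTip_lowered (hΦ : IsAmplitude K L Φ) (hK : IsCompact K)
    (ha : ContDiff ℝ (⊤ : ℕ∞) a) (p : ℝ) :
    ∃ N R, 1 ≤ R ∧ ∀ q ∈ K, VanishesAtTip (a q) N R (lowered p (a q) (Φ q)) := by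
  obtain ⟨A, hA⟩ := hK.exists_bound_of_continuousOn ha.continuous.continuousOn
  obtain ⟨M, hM0, hM⟩ := hΦ.exists_abs_le hK
  obtain ⟨M', hM'0, hM'⟩ := hΦ.deriv.exists_abs_le hK
  obtain ⟨M'', hM''0, hM''⟩ := (hΦ.lowered ha p).deriv.exists_abs_le hK
  refine ⟨2 * |p| * M + M' + M'', 1 + L ^ 2 + |A|,
    by linarith [sq_nonneg L, abs_nonneg A], fun q hq =>
    ⟨((hΦ.lowered ha p).contDiff_apply q).differentiable (by simp), fun τ => ?_,
      fun τ => (hM'' q hq τ).trans (by linarith [(by positivity : 0 ≤ 2 * |p| * M)]),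
      fun τ hτ => (hΦ.lowered ha p).eq_zero q hq τ ?_⟩⟩
  · calc |2 * p * τ * Φ q τ + (τ ^ 2 - a q) * deriv (Φ q) τ|
        ≤ 2 * |p| * |τ| * |Φ q τ| + |τ ^ 2 - a q| * |deriv (Φ q) τ| :=
          (abs_add_le _ _).trans_eq (by simp only [abs_mul, abs_two])
      _ ≤ 2 * |p| * |τ| * M + |τ ^ 2 - a q| * M' := by
          gcongr
          exacts [hM q hq τ, hM' q hq τ]
      _ = 2 * |p| * M * |τ| + M' * |τ ^ 2 - a q| := by ring
      _ ≤ (2 * |p| * M + M' + M'') * |τ| + (2 * |p| * M + M' + M'') * |τ ^ 2 - a q| := by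
          gcongr <;> linarith [(by positivity : 0 ≤ 2 * |p| * M)]
      _ = _ := by ring
  · have hAq : |a q| ≤ |A| := (hA q hq).trans (le_abs_self A)
    rcases hτ with hτ | hτ
    · nlinarith [abs_nonneg A, sq_nonneg (L - 1)]
    · refine (le_abs_self L).trans_lt (sq_lt_sq.1 ?_)
      linarith [neg_le_of_abs_le hAq]

theorem integrable_truncRpow_mul_lowered (hΦ : IsAmplitude K L Φ) (hK : IsCompact K)
    (ha : ContDiff ℝ (⊤ : ℕ∞) a) {p : ℝ} (hp : 0 < p) {q : P} (hq : q ∈ K) :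
    Integrable fun τ => truncRpow (p - 1) (τ ^ 2 - a q) * lowered p (a q) (Φ q) τ := by
  rcases lt_or_ge p 1 with hp1 | hp1
  · obtain ⟨N, R, hR, hN⟩ := hΦ.exists_vanishesAtTip_lowered hK ha p
    exact (hN q hq).integrable_truncRpow_mul hp hp1 hR
  · exact _root_.integrable_truncRpow_mul (sub_nonneg.2 hp1)
      ((hΦ.lowered ha p).contDiff_apply q).continuous ((hΦ.lowered ha p).eq_zero q hq)

theorem abs_oscInt_eq (hΦ : IsAmplitude K L Φ) (hK : IsCompact K) (ha : ContDiff ℝ (⊤ : ℕ∞) a)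
    {p : ℝ} (hp : 0 < p) {q : P} (hq : q ∈ K) {t : ℝ} (ht : 0 < t) (θ : ℝ) :
    |oscInt p (a q) (Φ q) t θ| =
      t⁻¹ * |oscInt (p - 1) (a q) (lowered p (a q) (Φ q)) t (θ - π / 2)| := by
  rw [oscInt_eq_neg_inv_mul_oscInt_lowered hp
    ((hΦ.contDiff_apply q).differentiable (by simp)) (hΦ.eq_zero q hq) ht.ne' θ
    (hΦ.integrable_truncRpow_mul_lowered hK ha hp hq), abs_mul, abs_neg, abs_of_pos (inv_pos.2 ht)]

theorem exists_abs_oscInt_le_of_lt_one (hΦ : IsAmplitude K L Φ) (hK : IsCompact K)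
    (ha : ContDiff ℝ (⊤ : ℕ∞) a) {p : ℝ} (hp0 : 0 ≤ p) (hp1 : p < 1) :
    ∃ C, ∀ q ∈ K, ∀ t θ, 0 < t → |oscInt p (a q) (Φ q) t θ| ≤ C * t ^ (-(p + 1)) := by
  rcases hp0.eq_or_lt with rfl | hp0
  · obtain ⟨M, -, hM⟩ := hΦ.exists_abs_le hK
    obtain ⟨M', -, hM'⟩ := hΦ.deriv.exists_abs_le hK
    refine ⟨2 * (max M M' + volume.real (Set.Icc (-L) L) * max M M'), fun q hq t θ ht => ?_⟩
    rw [zero_add, rpow_neg_one]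
    exact abs_oscInt_zero_le (a q) ((hΦ.contDiff_apply q).of_le (by simp))
      (fun τ => (hM q hq τ).trans (le_max_left _ _))
      (fun τ => (hM' q hq τ).trans (le_max_right _ _)) (hΦ.eq_zero q hq) ht θ
  · obtain ⟨N, R, hR, hN⟩ := hΦ.exists_vanishesAtTip_lowered hK ha p
    refine ⟨2 * ((1 / p + 1 + 1 / (1 - p)) * (5 * R ^ 2 * N)), fun q hq t θ ht => ?_⟩
    rw [hΦ.abs_oscInt_eq hK ha hp0 hq ht, neg_add, rpow_add ht, rpow_neg_one, mul_comm t⁻¹,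
      ← mul_assoc]
    gcongr
    exact (hN q hq).abs_oscInt_le hp0 hp1 hR ht _

theorem exists_abs_oscInt_le (hΦ : IsAmplitude K L Φ) (hK : IsCompact K)
    (ha : ContDiff ℝ (⊤ : ℕ∞) a) {p : ℝ} (hp : 0 ≤ p) :
    ∃ C, ∀ q ∈ K, ∀ t θ, 0 < t → |oscInt p (a q) (Φ q) t θ| ≤ C * t ^ (-(p + 1)) := by
  obtain ⟨n, hn⟩ := exists_nat_gt p
  induction n generalizing p Φ with
  | zero => exact absurd hp (not_le.2 (by simpa using hn))
  | succ n ih =>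
    rcases lt_or_ge p 1 with hp1 | hp1
    · exact hΦ.exists_abs_oscInt_le_of_lt_one hK ha hp hp1
    obtain ⟨C, hC⟩ := ih (hΦ.lowered ha p) (sub_nonneg.2 hp1) (by push_cast at hn; linarith)
    refine ⟨C, fun q hq t θ ht => ?_⟩
    rw [hΦ.abs_oscInt_eq hK ha (by linarith) hq ht]
    calc t⁻¹ * |oscInt (p - 1) (a q) (lowered p (a q) (Φ q)) t (θ - π / 2)|
        ≤ t⁻¹ * (C * t ^ (-(p - 1 + 1))) := by gcongr; exact hC q hq t _ ht
      _ = C * t ^ (-(p + 1)) := by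
          rw [sub_add_cancel, neg_add, rpow_add ht, rpow_neg_one]
          ring

end IsAmplitude

theorem le_mul_one_add_rpow_neg {x B C t k : ℝ} (hk : 0 ≤ k) (ht : 0 ≤ t) (hx : 0 ≤ x)
    (hB : x ≤ B) (hC : 0 < t → x ≤ C * t ^ (-k)) :
    x ≤ 2 ^ k * max B C * (1 + t) ^ (-k) := by
  have hmax : 0 ≤ max B C := (hx.trans hB).trans (le_max_left _ _)
  suffices h : ∃ y, 0 < y ∧ 1 + t ≤ 2 * y ∧ x ≤ max B C * y ^ (-k) by
    obtain ⟨y, hy, hty, hxy⟩ := h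
    calc x ≤ max B C * y ^ (-k) := hxy
      _ = 2 ^ k * max B C * (2 * y) ^ (-k) := by
          rw [mul_rpow two_pos.le hy.le, rpow_neg two_pos.le]
          field_simp
      _ ≤ _ := by
          gcongr ?_ * ?_
          exact rpow_le_rpow_of_nonpos (by linarith) hty (by linarith)
  rcases le_or_gt t 1 with h | h
  · exact ⟨1, one_pos, by linarith, by simpa using Or.inl hB⟩
  · refine ⟨t, by linarith, by linarith, (hC (by linarith)).trans ?_⟩
    gcongr
    exact le_max_right _ _

theorem oscInt_abs_zero (p a : ℝ) (φ : ℝ → ℝ) (t : ℝ) :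
    oscInt p a φ |t| 0 = oscInt p a φ t 0 := by
  rcases abs_choice t with h | h <;> simp only [oscInt, h, neg_mul, add_zero, cos_neg]

theorem IsAmplitude.exists_abs_oscInt_le_one_add_abs {P : Type*} [NormedAddCommGroup P]
    [NormedSpace ℝ P] {K : Set P} {L : ℝ} {Φ : P → ℝ → ℝ} {a : P → ℝ} (hΦ : IsAmplitude K L Φ)
    (hK : IsCompact K) (ha : ContDiff ℝ (⊤ : ℕ∞) a) {p : ℝ} (hp : 0 ≤ p) :
    ∃ C, ∀ q ∈ K, ∀ t, |oscInt p (a q) (Φ q) t 0| ≤ C * (1 + |t|) ^ (-(p + 1)) := by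
  obtain ⟨A, hA⟩ := hK.exists_bound_of_continuousOn ha.continuous.continuousOn
  obtain ⟨M, -, hM⟩ := hΦ.exists_abs_le hK
  obtain ⟨C, hC⟩ := hΦ.exists_abs_oscInt_le hK ha hp
  refine ⟨2 ^ (p + 1) * max (volume.real (Set.Icc (-L) L) * ((L ^ 2 + A) ^ p * M)) C,
    fun q hq t => ?_⟩
  rw [← oscInt_abs_zero]
  exact le_mul_one_add_rpow_neg (by linarith) (abs_nonneg t) (abs_nonneg _)
    (abs_oscInt_le hp (hA q hq) (hM q hq) (hΦ.eq_zero q hq) _ _) (hC q hq |t| 0)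

/-! ### The sheets of `|ξ|² - τ² = s` -/

/-- The point `(ξ, τ)` of `ℝ^m × ℝ`. -/
def spacetimePoint {m : ℕ} (ξ : EuclideanSpace ℝ (Fin m)) (τ : ℝ) : Spacetime m :=
  WithLp.toLp 2 (Fin.snoc ξ τ)

section SpacetimePoint

variable {m : ℕ}

@[simp]
theorem timeCoord_spacetimePoint (ξ : EuclideanSpace ℝ (Fin m)) (τ : ℝ) :
    timeCoord (spacetimePoint ξ τ) = τ := by
  simp [timeCoord, spacetimePoint]

theorem inner_spacetimePoint (ξ x : EuclideanSpace ℝ (Fin m)) (τ t : ℝ) :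
    ⟪spacetimePoint ξ τ, spacetimePoint x t⟫ = ⟪ξ, x⟫ + τ * t := by
  simp [spacetimePoint, PiLp.inner_apply, Fin.sum_univ_castSucc, mul_comm]

theorem norm_spacetimePoint_sq (ξ : EuclideanSpace ℝ (Fin m)) (τ : ℝ) :
    ‖spacetimePoint ξ τ‖ ^ 2 = ‖ξ‖ ^ 2 + τ ^ 2 := by
  rw [← real_inner_self_eq_norm_sq, inner_spacetimePoint, real_inner_self_eq_norm_sq, sq τ]

theorem spacetimePoint_sub (ξ ξ' : EuclideanSpace ℝ (Fin m)) (τ τ' : ℝ) :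
    spacetimePoint ξ τ - spacetimePoint ξ' τ' = spacetimePoint (ξ - ξ') (τ - τ') := by
  ext i
  refine Fin.lastCases ?_ (fun i => ?_) i <;> simp [spacetimePoint]

theorem dist_spacetimePoint_sq (ξ ξ' : EuclideanSpace ℝ (Fin m)) (τ τ' : ℝ) :
    dist (spacetimePoint ξ τ) (spacetimePoint ξ' τ') ^ 2 = dist ξ ξ' ^ 2 + (τ - τ') ^ 2 := by
  rw [dist_eq_norm, dist_eq_norm, spacetimePoint_sub, norm_spacetimePoint_sq]

theorem exists_spacetimePoint_eq (z : Spacetime m) :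
    ∃ ξ : EuclideanSpace ℝ (Fin m), spacetimePoint ξ (timeCoord z) = z := by
  refine ⟨WithLp.toLp 2 fun i => z i.castSucc, ?_⟩
  ext i
  refine Fin.lastCases ?_ (fun i => ?_) i <;> simp [spacetimePoint, timeCoord]

theorem waveSymbol_spacetimePoint (ξ : EuclideanSpace ℝ (Fin m)) (τ : ℝ) :
    waveSymbol (spacetimePoint ξ τ) = ‖ξ‖ ^ 2 - τ ^ 2 := by
  rw [waveSymbol, norm_spacetimePoint_sq, timeCoord_spacetimePoint]
  ring

theorem continuous_spacetimePoint :
    Continuous fun p : EuclideanSpace ℝ (Fin m) × ℝ => spacetimePoint p.1 p.2 := by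
  refine (PiLp.continuous_toLp 2 _).comp (continuous_pi fun i => ?_)
  refine Fin.lastCases ?_ (fun i => ?_) i
  · simpa using continuous_snd
  · simp only [Fin.snoc_castSucc]
    fun_prop

theorem isometry_spacetimePoint_zero :
    Isometry fun ξ : EuclideanSpace ℝ (Fin m) => spacetimePoint ξ 0 :=
  Isometry.of_dist_eq fun ξ ξ' => by
    rw [← sq_eq_sq₀ dist_nonneg dist_nonneg, dist_spacetimePoint_sq, sub_self,
      zero_pow two_ne_zero, add_zero]

end SpacetimePoint

section Sheets

variable {m : ℕ} {ε s : ℝ}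

/-- The sheet of the hyperboloid `|ξ|² - τ² = s` on which `τ` has the sign `ε = ±1`. The equator
`τ = 0`, which belongs to the level set if `0 ≤ s`, is left out. -/
def sheet (m : ℕ) (ε s : ℝ) : Set (Spacetime m) := {z | waveSymbol z = s ∧ 0 < ε * timeCoord z}

/-- The open set of space variables over which the sheets of `|ξ|² - τ² = s` lie. -/
def sheetBase (m : ℕ) (s : ℝ) : Set (EuclideanSpace ℝ (Fin m)) := {ξ | s < ‖ξ‖ ^ 2}

/-- The height at which the sheet of sign `ε` lies over `ξ`. -/
def sheetHeight (ε s : ℝ) (ξ : EuclideanSpace ℝ (Fin m)) : ℝ := ε * √(‖ξ‖ ^ 2 - s)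

/-- The parametrization of the sheet of sign `ε` by the space variable. -/
def sheetPoint (ε s : ℝ) (ξ : EuclideanSpace ℝ (Fin m)) : Spacetime m :=
  spacetimePoint ξ (sheetHeight ε s ξ)

/-- The surface density of either sheet with respect to the space variable `ξ`, as a function of
`u = |ξ|²`, extended by zero outside of the base `u > s`. -/
def sheetDensity (s u : ℝ) : ℝ := if s < u then √((2 * u - s) / (u - s)) else 0

theorem sheetDensity_nonneg (s u : ℝ) : 0 ≤ sheetDensity s u := by
  unfold sheetDensity
  split_ifs
  exacts [Real.sqrt_nonneg _, le_rfl]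

theorem measurable_sheetDensity (s : ℝ) : Measurable (sheetDensity s) :=
  Measurable.ite measurableSet_Ioi (by fun_prop) measurable_const

theorem measurable_ofReal_sheetDensity_norm_sq (s : ℝ) :
    Measurable fun ξ : EuclideanSpace ℝ (Fin m) => ENNReal.ofReal (sheetDensity s (‖ξ‖ ^ 2)) :=
  ((measurable_sheetDensity s).comp (by fun_prop)).ennreal_ofReal

theorem isOpen_sheetBase (s : ℝ) : IsOpen (sheetBase m s) :=
  isOpen_lt continuous_const (by fun_prop)

theorem continuous_sheetHeight (ε s : ℝ) : Continuous (sheetHeight (m := m) ε s) := by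
  unfold sheetHeight
  fun_prop

theorem isGraphMap_sheetPoint (ε s : ℝ) :
    IsGraphMap (sheetPoint (m := m) ε s) (sheetHeight ε s) :=
  fun _ _ => dist_spacetimePoint_sq _ _ _ _

theorem injective_sheetPoint (ε s : ℝ) : Function.Injective (sheetPoint (m := m) ε s) := by
  intro ξ ξ' h
  have hdist := isGraphMap_sheetPoint ε s ξ ξ'
  rw [h, dist_self] at hdist
  exact dist_eq_zero.1 (pow_eq_zero_iff two_ne_zero |>.1 <| by
    nlinarith [sq_nonneg (dist ξ ξ'), sq_nonneg (sheetHeight ε s ξ - sheetHeight ε s ξ')])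

theorem measurableEmbedding_sheetPoint (ε s : ℝ) :
    MeasurableEmbedding (sheetPoint (m := m) ε s) :=
  (continuous_spacetimePoint.comp
    (continuous_id.prodMk (continuous_sheetHeight ε s))).measurableEmbedding
      (injective_sheetPoint ε s)

theorem image_sheetPoint_sheetBase (hε : ε ^ 2 = 1) (s : ℝ) :
    sheetPoint ε s '' sheetBase m s = sheet m ε s := by
  have hεε : ε * ε = 1 := by rw [← sq, hε]
  ext z
  constructor
  · rintro ⟨ξ, hξ, rfl⟩
    have hpos : 0 < ‖ξ‖ ^ 2 - s := sub_pos.2 hξ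
    refine ⟨?_, ?_⟩
    · rw [sheetPoint, waveSymbol_spacetimePoint, sheetHeight, mul_pow, hε, Real.sq_sqrt hpos.le]
      ring
    · rw [sheetPoint, timeCoord_spacetimePoint, sheetHeight, ← mul_assoc, hεε, one_mul]
      exact Real.sqrt_pos.2 hpos
  · rintro ⟨hz, hpos⟩
    obtain ⟨ξ, hξ⟩ := exists_spacetimePoint_eq z
    rw [← hξ, waveSymbol_spacetimePoint] at hz
    have hsq : ‖ξ‖ ^ 2 - s = (ε * timeCoord z) ^ 2 := by
      rw [mul_pow, hε, ← hz]
      ring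
    refine ⟨ξ, sub_pos.1 (hsq ▸ pow_pos hpos 2), ?_⟩
    rw [sheetPoint, sheetHeight, hsq, Real.sqrt_sq hpos.le, ← mul_assoc, hεε, one_mul, hξ]

theorem measurableSet_sheet (hε : ε ^ 2 = 1) (s : ℝ) : MeasurableSet (sheet m ε s) := by
  rw [← image_sheetPoint_sheetBase hε]
  exact (measurableEmbedding_sheetPoint ε s).measurableSet_image.2
    (isOpen_sheetBase s).measurableSet

theorem hasStrictFDerivAt_sheetHeight (ε : ℝ) {ξ : EuclideanSpace ℝ (Fin m)}
    (hξ : ξ ∈ sheetBase m s) :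
    HasStrictFDerivAt (sheetHeight ε s) (innerSL ℝ ((ε * (√(‖ξ‖ ^ 2 - s))⁻¹) • ξ)) ξ := by
  have hsqrt := ((hasStrictFDerivAt_norm_sq ξ).sub_const s).sqrt (sub_pos.2 hξ).ne'
  refine (hsqrt.const_mul ε).congr_fderiv ?_
  ext v
  simp only [one_div, mul_inv_rev, smul_apply, coe_innerSL_apply, nsmul_eq_mul, Nat.cast_ofNat,
    smul_eq_mul, map_smul]
  ring

theorem sqrt_one_add_norm_gradient_sq (hε : ε ^ 2 = 1) {ξ : EuclideanSpace ℝ (Fin m)}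
    (hξ : ξ ∈ sheetBase m s) :
    √(1 + ‖(ε * (√(‖ξ‖ ^ 2 - s))⁻¹) • ξ‖ ^ 2) = sheetDensity s (‖ξ‖ ^ 2) := by
  have hpos : 0 < ‖ξ‖ ^ 2 - s := sub_pos.2 hξ
  rw [norm_smul, mul_pow, Real.norm_eq_abs, sq_abs, mul_pow, hε, one_mul, inv_pow,
    Real.sq_sqrt hpos.le, sheetDensity, if_pos (show s < ‖ξ‖ ^ 2 from hξ)]
  congr 1
  field_simp
  ring

theorem hausdorffMeasure_restrict_sheet (hε : ε ^ 2 = 1) (s : ℝ) :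
    (μH[(m : ℝ)]).restrict (sheet m ε s) = Measure.map (sheetPoint ε s)
      ((μH[(m : ℝ)]).withDensity fun ξ => ENNReal.ofReal (sheetDensity s (‖ξ‖ ^ 2))) := by
  have hU : MeasurableSet (sheetBase m s) := (isOpen_sheetBase s).measurableSet
  have hsqrt : Continuous fun ξ : EuclideanSpace ℝ (Fin m) => √(‖ξ‖ ^ 2 - s) := by fun_prop
  have hgrad : ContinuousOn (fun ξ => (ε * (√(‖ξ‖ ^ 2 - s))⁻¹) • ξ) (sheetBase m s) :=
    (continuousOn_const.mul (hsqrt.continuousOn.inv₀ fun ξ hξ =>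
      (Real.sqrt_pos.2 (sub_pos.2 hξ)).ne')).smul continuousOn_id
  have harea := (isGraphMap_sheetPoint ε s).hausdorffMeasure_restrict_image
    (measurableEmbedding_sheetPoint ε s) (isOpen_sheetBase s)
    (fun ξ hξ => hasStrictFDerivAt_sheetHeight ε hξ) hgrad
  rw [finrank_euclideanSpace_fin, image_sheetPoint_sheetBase hε] at harea
  rw [harea, ← withDensity_indicator hU]
  congr 2 with ξ
  by_cases hξ : ξ ∈ sheetBase m s
  · rw [Set.indicator_of_mem hξ, sqrt_one_add_norm_gradient_sq hε hξ]
  · rw [Set.indicator_of_notMem hξ, sheetDensity, if_neg (show ¬s < ‖ξ‖ ^ 2 from hξ),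
      ENNReal.ofReal_zero]

theorem exists_hausdorffMeasure_eq_smul_volume (m : ℕ) :
    ∃ c : NNReal, (μH[(m : ℝ)] : Measure (EuclideanSpace ℝ (Fin m))) = c • volume := by
  have h := isAddHaarMeasure_hausdorffMeasure (E := EuclideanSpace ℝ (Fin m))
  rw [finrank_euclideanSpace_fin] at h
  exact ⟨_, Measure.isAddLeftInvariant_eq_smul _ _⟩

theorem hausdorffMeasure_equator [NeZero m] (s : ℝ) :
    μH[(m : ℝ)] {z : Spacetime m | waveSymbol z = s ∧ timeCoord z = 0} = 0 := by
  obtain ⟨c, hc⟩ := exists_hausdorffMeasure_eq_smul_volume m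
  refine measure_mono_null (t := (fun ξ => spacetimePoint ξ 0) '' Metric.sphere 0 (√s)) ?_ ?_
  · rintro z ⟨hz, hz0⟩
    obtain ⟨ξ, hξ⟩ := exists_spacetimePoint_eq z
    rw [hz0] at hξ
    refine ⟨ξ, ?_, hξ⟩
    rw [← hξ, waveSymbol_spacetimePoint] at hz
    simp [← hz]
  · rw [isometry_spacetimePoint_zero.hausdorffMeasure_image (Or.inl m.cast_nonneg), hc,
      Measure.smul_apply, Measure.addHaar_sphere, smul_zero]

theorem levelMeasure_eq [NeZero m] (s : ℝ) :
    levelMeasure m s =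
      (μH[(m : ℝ)]).restrict (sheet m 1 s) + (μH[(m : ℝ)]).restrict (sheet m (-1) s) := by
  rw [← Measure.restrict_union _ (measurableSet_sheet (by norm_num) s), levelMeasure]
  · refine Measure.restrict_congr_set ?_
    filter_upwards [measure_eq_zero_iff_ae_notMem.1 (hausdorffMeasure_equator (m := m) s)] with z hz
    refine propext (?_ : (waveSymbol z = s ∧ z ≠ 0) ↔ z ∈ sheet m 1 s ∪ sheet m (-1) s)
    simp only [Set.mem_union, sheet, Set.mem_ofPred_eq, ← and_or_left]
    refine and_congr_right fun hzs => ?_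
    have ht : timeCoord z ≠ 0 := fun h => hz ⟨hzs, h⟩
    refine iff_of_true (fun h => ht (by simp [h, timeCoord])) ?_
    rcases ht.lt_or_gt with h | h
    · exact Or.inr (by linarith)
    · exact Or.inl (by linarith)
  · exact Set.disjoint_left.2 fun z hz hz' => by linarith [hz.2, hz'.2]

section Integral

variable {F : Type*} [NormedAddCommGroup F] [NormedSpace ℝ F]

theorem integrableOn_sheet_iff (hε : ε ^ 2 = 1) (f : Spacetime m → F) :
    IntegrableOn f (sheet m ε s) μH[(m : ℝ)] ↔
      Integrable (fun ξ => sheetDensity s (‖ξ‖ ^ 2) • f (sheetPoint ε s ξ)) μH[(m : ℝ)] := by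
  rw [IntegrableOn, hausdorffMeasure_restrict_sheet hε,
    (measurableEmbedding_sheetPoint ε s).integrable_map_iff,
    integrable_withDensity_iff_integrable_smul' (measurable_ofReal_sheetDensity_norm_sq s)
      (ae_of_all _ fun _ => ENNReal.ofReal_lt_top)]
  simp only [ENNReal.toReal_ofReal (sheetDensity_nonneg _ _), Function.comp_apply]

theorem setIntegral_sheet (hε : ε ^ 2 = 1) (f : Spacetime m → F) :
    ∫ z in sheet m ε s, f z ∂μH[(m : ℝ)] =
      ∫ ξ, sheetDensity s (‖ξ‖ ^ 2) • f (sheetPoint ε s ξ) ∂μH[(m : ℝ)] := by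
  rw [hausdorffMeasure_restrict_sheet hε, (measurableEmbedding_sheetPoint ε s).integral_map,
    integral_withDensity_eq_integral_toReal_smul (measurable_ofReal_sheetDensity_norm_sq s)
      (ae_of_all _ fun _ => ENNReal.ofReal_lt_top)]
  simp only [ENNReal.toReal_ofReal (sheetDensity_nonneg _ _)]

end Integral

end Sheets

section Reduction

variable {m : ℕ} {η : Spacetime m → ℝ}

/-- The value of a radial function on the sphere `‖z‖² = u`. -/
def radialProfile (η : Spacetime m → ℝ) (u : ℝ) : ℝ :=
  η (√u • EuclideanSpace.single (Fin.last m) 1)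

/-- The truncated surface measure on a sheet of `|ξ|² - τ² = s` as a density in `ξ`, where `h` is
the profile of the cut-off and `u = |ξ|²`. -/
def sheetWeight (h : ℝ → ℝ) (s u : ℝ) : ℝ := sheetDensity s u * h (2 * u - s)

/-- The joint contribution of both sheets over the sphere `|ξ|² = u` to the inverse Fourier
transform at time `t`, up to the oscillation in `ξ`. -/
def sheetKernel (h : ℝ → ℝ) (s t u : ℝ) : ℝ :=
  sheetWeight h s u * (2 * cos (2 * π * t * √(u - s)))

theorem eq_radialProfile (hη : ∀ z z' : Spacetime m, ‖z‖ = ‖z'‖ → η z = η z') (z : Spacetime m) :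
    η z = radialProfile η (‖z‖ ^ 2) :=
  hη _ _ (by simp [norm_smul])

theorem norm_sheetPoint_sq {ε s : ℝ} (hε : ε ^ 2 = 1) {ξ : EuclideanSpace ℝ (Fin m)}
    (hξ : s < ‖ξ‖ ^ 2) : ‖sheetPoint ε s ξ‖ ^ 2 = 2 * ‖ξ‖ ^ 2 - s := by
  rw [sheetPoint, norm_spacetimePoint_sq, sheetHeight, mul_pow, hε,
    Real.sq_sqrt (sub_nonneg.2 hξ.le)]
  ring

theorem sheetDensity_mul_apply_sheetPoint (hη : ∀ z z' : Spacetime m, ‖z‖ = ‖z'‖ → η z = η z')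
    {ε : ℝ} (hε : ε ^ 2 = 1) (s : ℝ) (ξ : EuclideanSpace ℝ (Fin m)) :
    sheetDensity s (‖ξ‖ ^ 2) * η (sheetPoint ε s ξ) =
      sheetWeight (radialProfile η) s (‖ξ‖ ^ 2) := by
  by_cases hξ : s < ‖ξ‖ ^ 2
  · rw [sheetWeight, eq_radialProfile hη, norm_sheetPoint_sq hε hξ]
  · rw [sheetWeight, sheetDensity, if_neg hξ, zero_mul, zero_mul]

theorem sheetDensity_smul_fourierChar_smul (hη : ∀ z z' : Spacetime m, ‖z‖ = ‖z'‖ → η z = η z')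
    {ε : ℝ} (hε : ε ^ 2 = 1) (s : ℝ) (ξ : EuclideanSpace ℝ (Fin m)) (w : Spacetime m) :
    sheetDensity s (‖ξ‖ ^ 2) • 𝐞 ⟪sheetPoint ε s ξ, w⟫ • (η (sheetPoint ε s ξ) : ℂ) =
      𝐞 ⟪sheetPoint ε s ξ, w⟫ • (sheetWeight (radialProfile η) s (‖ξ‖ ^ 2) : ℂ) := by
  rw [smul_comm, ← sheetDensity_mul_apply_sheetPoint hη hε, Complex.ofReal_mul,
    Complex.real_smul]

theorem fourierChar_inner_sheetPoint (ε s t : ℝ) (ξ x : EuclideanSpace ℝ (Fin m)) :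
    𝐞 ⟪sheetPoint ε s ξ, spacetimePoint x t⟫ =
      𝐞 ⟪ξ, x⟫ * 𝐞 (ε * (t * √(‖ξ‖ ^ 2 - s))) := by
  rw [← AddChar.map_add_eq_mul, sheetPoint, inner_spacetimePoint, sheetHeight]
  congr 2
  ring

theorem fourierChar_add_fourierChar_neg (x : ℝ) :
    (𝐞 x : ℂ) + 𝐞 (-x) = ((2 * cos (2 * π * x) : ℝ) : ℂ) := by
  rw [Real.fourierChar_apply, Real.fourierChar_apply, mul_neg, Complex.ofReal_neg,
    ← Complex.two_cos]
  push_cast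
  rfl

theorem fourierChar_smul_add_eq_sheetKernel (h : ℝ → ℝ) (s t : ℝ)
    (ξ x : EuclideanSpace ℝ (Fin m)) :
    𝐞 ⟪sheetPoint 1 s ξ, spacetimePoint x t⟫ • (sheetWeight h s (‖ξ‖ ^ 2) : ℂ) +
        𝐞 ⟪sheetPoint (-1) s ξ, spacetimePoint x t⟫ • (sheetWeight h s (‖ξ‖ ^ 2) : ℂ) =
      𝐞 ⟪ξ, x⟫ • (sheetKernel h s t (‖ξ‖ ^ 2) : ℂ) := by
  rw [fourierChar_inner_sheetPoint, fourierChar_inner_sheetPoint, mul_smul, mul_smul, ← smul_add,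
    one_mul, neg_one_mul, Circle.smul_def (𝐞 (t * _)), Circle.smul_def (𝐞 (-_)), ← add_smul,
    fourierChar_add_fourierChar_neg, sheetKernel, smul_eq_mul, ← Complex.ofReal_mul]
  ring_nf

theorem sigmaCheck_eq (η : Spacetime m → ℝ) (s : ℝ) (w : Spacetime m) :
    sigmaCheck η s w = ∫ z, 𝐞 ⟪z, w⟫ • (η z : ℂ) ∂levelMeasure m s := by
  refine integral_congr_ae (ae_of_all _ fun z => ?_)
  simp only [Circle.smul_def, Real.fourierChar_apply, smul_eq_mul]
  push_cast
  ring_nf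

theorem integrable_fourierChar_smul {α F : Type*} [MeasurableSpace α] [NormedAddCommGroup F]
    [NormedSpace ℂ F] {μ : Measure α} {f : α → F} (hf : Integrable f μ) {φ : α → ℝ}
    (hφ : AEMeasurable φ μ) : Integrable (fun a => 𝐞 (φ a) • f a) μ :=
  hf.bdd_smul 1
    (Real.continuous_fourierChar.subtype_val.measurable.comp_aemeasurable hφ).aestronglyMeasurable
    (ae_of_all _ fun _ => (Circle.norm_coe _).le)

theorem integrable_fourierChar_smul_sheetWeight {h : ℝ → ℝ} {s : ℝ}
    {μ : Measure (EuclideanSpace ℝ (Fin m))}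
    (hh : Integrable (fun ξ => sheetWeight h s (‖ξ‖ ^ 2)) μ) (ε : ℝ) (w : Spacetime m) :
    Integrable (fun ξ => 𝐞 ⟪sheetPoint ε s ξ, w⟫ • (sheetWeight h s (‖ξ‖ ^ 2) : ℂ)) μ :=
  integrable_fourierChar_smul hh.ofReal ((continuous_id.inner continuous_const).measurable.comp
    (measurableEmbedding_sheetPoint ε s).measurable).aemeasurable

theorem sigmaCheck_spacetimePoint_eq [NeZero m]
    (hη : ∀ z z' : Spacetime m, ‖z‖ = ‖z'‖ → η z = η z') {s : ℝ}
    (hint : Integrable (fun ξ : EuclideanSpace ℝ (Fin m) =>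
      sheetWeight (radialProfile η) s (‖ξ‖ ^ 2)) μH[(m : ℝ)])
    (x : EuclideanSpace ℝ (Fin m)) (t : ℝ) :
    sigmaCheck η s (spacetimePoint x t) =
      ∫ ξ, 𝐞 ⟪ξ, x⟫ • (sheetKernel (radialProfile η) s t (‖ξ‖ ^ 2) : ℂ) ∂μH[(m : ℝ)] := by
  have hsheet := integrable_fourierChar_smul_sheetWeight hint
  have hintegrable : ∀ ε : ℝ, ε ^ 2 = 1 →
      IntegrableOn (fun z => 𝐞 ⟪z, spacetimePoint x t⟫ • (η z : ℂ)) (sheet m ε s) μH[(m : ℝ)] :=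
    fun ε hε => (integrableOn_sheet_iff hε _).2 <| by
      simpa only [sheetDensity_smul_fourierChar_smul hη hε] using hsheet ε (spacetimePoint x t)
  rw [sigmaCheck_eq, levelMeasure_eq,
    integral_add_measure (hintegrable 1 (by norm_num)) (hintegrable (-1) (by norm_num)),
    setIntegral_sheet (by norm_num), setIntegral_sheet (by norm_num)]
  simp only [sheetDensity_smul_fourierChar_smul hη (ε := 1) (by norm_num),
    sheetDensity_smul_fourierChar_smul hη (ε := -1) (by norm_num)]
  rw [← integral_add (hsheet _ _) (hsheet _ _)]
  simp only [fourierChar_smul_add_eq_sheetKernel]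

end Reduction

/-! ### The radial integral in hyperbolic coordinates -/

section HyperbolicSubstitution

variable {a τ : ℝ}

theorem sqrt_neg_lt_sqrt_sq_sub (hτ : √a < τ) : √(-a) < √(τ ^ 2 - a) := by
  have hpos := sq_sub_pos_of_sqrt_lt hτ
  have hτ0 : 0 < τ := (Real.sqrt_nonneg a).trans_lt hτ
  rw [Real.sqrt_lt' (Real.sqrt_pos.2 hpos), Real.sq_sqrt hpos.le]
  linarith [pow_pos hτ0 2]

theorem sqrt_sqrt_sq_sub_sq_add (hτ : √a < τ) : √(√(τ ^ 2 - a) ^ 2 + a) = τ := by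
  rw [Real.sq_sqrt (sq_sub_pos_of_sqrt_lt hτ).le, sub_add_cancel,
    Real.sqrt_sq ((Real.sqrt_nonneg a).trans hτ.le)]

theorem image_sqrt_sq_sub_Ioi (a : ℝ) :
    (fun τ => √(τ ^ 2 - a)) '' Set.Ioi √a = Set.Ioi √(-a) := by
  refine Set.Subset.antisymm ?_ fun r hr => ⟨√(r ^ 2 - -a), ?_, ?_⟩
  · rintro _ ⟨τ, hτ, rfl⟩
    exact sqrt_neg_lt_sqrt_sq_sub hτ
  · have h := sqrt_neg_lt_sqrt_sq_sub hr
    rwa [neg_neg] at h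
  · simpa only [sub_eq_add_neg] using sqrt_sqrt_sq_sub_sq_add hr

theorem injOn_sqrt_sq_sub (a : ℝ) : Set.InjOn (fun τ => √(τ ^ 2 - a)) (Set.Ioi √a) :=
  Set.LeftInvOn.injOn (f₁' := fun r => √(r ^ 2 + a)) fun _ => sqrt_sqrt_sq_sub_sq_add

theorem hasDerivAt_sqrt_sq_sub (hτ : √a < τ) :
    HasDerivAt (fun τ => √(τ ^ 2 - a)) (τ / √(τ ^ 2 - a)) τ := by
  refine (((hasDerivAt_pow 2 τ).sub_const a).sqrt (sq_sub_pos_of_sqrt_lt hτ).ne').congr_deriv ?_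
  rw [Nat.cast_two, pow_one, mul_div_mul_left _ _ two_ne_zero]

theorem abs_div_sqrt_sq_sub (hτ : √a < τ) : |τ / √(τ ^ 2 - a)| = τ / √(τ ^ 2 - a) :=
  abs_of_nonneg (div_nonneg ((Real.sqrt_nonneg a).trans hτ.le) (Real.sqrt_nonneg _))

variable {F : Type*} [NormedAddCommGroup F] [NormedSpace ℝ F]

theorem integrableOn_Ioi_sqrt_neg_iff (f : ℝ → F) :
    IntegrableOn f (Set.Ioi √(-a)) ↔
      IntegrableOn (fun τ => (τ / √(τ ^ 2 - a)) • f √(τ ^ 2 - a)) (Set.Ioi √a) := by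
  rw [← image_sqrt_sq_sub_Ioi, integrableOn_image_iff_integrableOn_abs_deriv_smul measurableSet_Ioi
    (fun τ hτ => (hasDerivAt_sqrt_sq_sub hτ).hasDerivWithinAt) (injOn_sqrt_sq_sub a)]
  exact integrableOn_congr_fun (fun τ hτ => by simp only [abs_div_sqrt_sq_sub hτ]) measurableSet_Ioi

theorem integral_Ioi_sqrt_neg (f : ℝ → F) :
    ∫ r in Set.Ioi √(-a), f r = ∫ τ in Set.Ioi √a, (τ / √(τ ^ 2 - a)) • f √(τ ^ 2 - a) := by
  rw [← image_sqrt_sq_sub_Ioi, integral_image_eq_integral_abs_deriv_smul measurableSet_Ioi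
    (fun τ hτ => (hasDerivAt_sqrt_sq_sub hτ).hasDerivWithinAt) (injOn_sqrt_sq_sub a)]
  exact setIntegral_congr_fun measurableSet_Ioi fun τ hτ => by simp only [abs_div_sqrt_sq_sub hτ]

end HyperbolicSubstitution

section WaveAmplitude

variable {h : ℝ → ℝ} {T : ℝ}

/-- The amplitude in `τ` of the inverse Fourier transform of the surface measure on
`|ξ|² - τ² = s` cut off by `h(|z|²)`, where `|z|² = 2τ² + s`. -/
def waveAmplitude (h : ℝ → ℝ) (s τ : ℝ) : ℝ := √(2 * τ ^ 2 + s) * h (2 * τ ^ 2 + s)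

theorem waveAmplitude_neg (h : ℝ → ℝ) (s τ : ℝ) : waveAmplitude h s (-τ) = waveAmplitude h s τ := by
  rw [waveAmplitude, waveAmplitude, neg_sq]

theorem continuous_waveAmplitude (hh : Continuous fun u => √u * h u) (s : ℝ) :
    Continuous (waveAmplitude h s) :=
  hh.comp (by fun_prop : Continuous fun τ : ℝ => 2 * τ ^ 2 + s)

theorem waveAmplitude_eq_zero_of_sqrt_lt_abs (hT : ∀ u, T < u → h u = 0) {s τ : ℝ}
    (hτ : √(T - s) < |τ|) : waveAmplitude h s τ = 0 := by
  have hsq := sq_sub_pos_of_sqrt_lt hτ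
  rw [sq_abs] at hsq
  rw [waveAmplitude, hT _ (by nlinarith [sq_nonneg τ]), mul_zero]

theorem integrable_truncRpow_mul_waveAmplitude (hh : Continuous fun u => √u * h u)
    (hT : ∀ u, T < u → h u = 0) {p : ℝ} (hp : 0 ≤ p) (a s : ℝ) :
    Integrable fun τ => truncRpow p (τ ^ 2 - a) * waveAmplitude h s τ :=
  integrable_truncRpow_mul hp (continuous_waveAmplitude hh s)
    fun _ => waveAmplitude_eq_zero_of_sqrt_lt_abs hT

theorem div_mul_pow_mul_sheetWeight (h : ℝ → ℝ) {s v τ : ℝ} (j : ℕ) (hτ : √(v ^ 2 - s) < τ) :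
    τ / √(τ ^ 2 - (v ^ 2 - s)) * (√(τ ^ 2 - (v ^ 2 - s)) ^ (j + 1) *
        sheetWeight h s (v ^ 2 + √(τ ^ 2 - (v ^ 2 - s)) ^ 2)) =
      truncRpow (j / 2) (τ ^ 2 - (v ^ 2 - s)) * waveAmplitude h s τ := by
  have hpos := sq_sub_pos_of_sqrt_lt hτ
  have hτ0 : 0 < τ := (Real.sqrt_nonneg _).trans_lt hτ
  have hr : 0 < √(τ ^ 2 - (v ^ 2 - s)) := Real.sqrt_pos.2 hpos
  have hu : v ^ 2 + √(τ ^ 2 - (v ^ 2 - s)) ^ 2 = τ ^ 2 + s := by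
    rw [Real.sq_sqrt hpos.le]
    ring
  have hdensity : sheetDensity s (τ ^ 2 + s) = √(2 * τ ^ 2 + s) / τ := by
    rw [sheetDensity, if_pos (by linarith [pow_pos hτ0 2]), add_sub_cancel_right,
      Real.sqrt_div' _ (sq_nonneg τ), Real.sqrt_sq hτ0.le]
    ring_nf
  rw [hu, sheetWeight, hdensity, truncRpow_of_pos hpos, waveAmplitude,
    rpow_div_two_eq_sqrt _ hpos.le, rpow_natCast,
    (by ring : 2 * (τ ^ 2 + s) - s = 2 * τ ^ 2 + s)]
  field_simp [hr.ne', hτ0.ne']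
  ring

theorem sheetWeight_eq_zero {s v r : ℝ} (hr : r ∈ Set.Ioi 0 \ Set.Ioi √(-(v ^ 2 - s))) :
    sheetWeight h s (v ^ 2 + r ^ 2) = 0 := by
  have hle : r ^ 2 ≤ -(v ^ 2 - s) := (Real.le_sqrt' hr.1).1 (not_lt.1 hr.2)
  rw [sheetWeight, sheetDensity, if_neg (by linarith), zero_mul]

theorem integrable_sheetWeight (hh : Continuous fun u => √u * h u)
    (hT : ∀ u, T < u → h u = 0) (s v : ℝ) (j : ℕ) :
    Integrable fun ζ : EuclideanSpace ℝ (Fin (j + 2)) => sheetWeight h s (v ^ 2 + ‖ζ‖ ^ 2) := by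
  rw [integrable_fun_norm_addHaar volume (f := fun r => sheetWeight h s (v ^ 2 + r ^ 2)),
    finrank_euclideanSpace_fin]
  refine IntegrableOn.of_forall_sdiff_eq_zero (s := Set.Ioi √(-(v ^ 2 - s))) ?_ measurableSet_Ioi
    fun r hr => by rw [sheetWeight_eq_zero hr, smul_zero]
  refine (integrableOn_Ioi_sqrt_neg_iff _).2 ?_
  exact (integrable_truncRpow_mul_waveAmplitude hh hT (by positivity) _ s).integrableOn.congr_fun
    (fun τ hτ => (div_mul_pow_mul_sheetWeight h j hτ).symm) measurableSet_Ioi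

theorem oscInt_waveAmplitude_zero (hh : Continuous fun u => √u * h u)
    (hT : ∀ u, T < u → h u = 0) {p : ℝ} (hp : 0 ≤ p) (a s t : ℝ) :
    oscInt p a (waveAmplitude h s) t 0 =
      ∫ τ in Set.Ioi √a, truncRpow p (τ ^ 2 - a) * waveAmplitude h s τ * (2 * cos (t * τ)) := by
  rw [oscInt_eq_integral_Ioi_sqrt_add t 0 (integrable_truncRpow_mul_waveAmplitude hh hT hp a s)]
  simp only [waveAmplitude_neg, neg_zero, add_zero, mul_left_comm _ (2 : ℝ), integral_const_mul]
  ring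

theorem integral_pow_mul_sheetKernel (hh : Continuous fun u => √u * h u)
    (hT : ∀ u, T < u → h u = 0) (s v t : ℝ) (j : ℕ) :
    ∫ r in Set.Ioi 0, r ^ (j + 1) * sheetKernel h s t (v ^ 2 + r ^ 2) =
      oscInt (j / 2) (v ^ 2 - s) (waveAmplitude h s) (2 * π * t) 0 := by
  have htrunc := setIntegral_eq_of_subset_of_forall_sdiff_eq_zero
    (f := fun r => r ^ (j + 1) * sheetKernel h s t (v ^ 2 + r ^ 2)) measurableSet_Ioi (μ := volume)
    (Set.Ioi_subset_Ioi (Real.sqrt_nonneg (-(v ^ 2 - s)))) fun r hr => by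
      rw [sheetKernel, sheetWeight_eq_zero hr, zero_mul, mul_zero]
  rw [htrunc, integral_Ioi_sqrt_neg, oscInt_waveAmplitude_zero hh hT (by positivity)]
  refine setIntegral_congr_fun measurableSet_Ioi fun τ hτ => ?_
  have htime : √(v ^ 2 + √(τ ^ 2 - (v ^ 2 - s)) ^ 2 - s) = τ :=
    (by ring_nf : _ = √(√(τ ^ 2 - (v ^ 2 - s)) ^ 2 + (v ^ 2 - s))).trans
      (sqrt_sqrt_sq_sub_sq_add hτ)
  simp only [smul_eq_mul]
  rw [← div_mul_pow_mul_sheetWeight h j hτ, sheetKernel, htime]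
  ring

theorem integral_sheetKernel (hh : Continuous fun u => √u * h u)
    (hT : ∀ u, T < u → h u = 0) (s v t : ℝ) (j : ℕ) :
    ∫ ζ : EuclideanSpace ℝ (Fin (j + 2)), sheetKernel h s t (v ^ 2 + ‖ζ‖ ^ 2) =
      (j + 2) * volume.real (Metric.ball (0 : EuclideanSpace ℝ (Fin (j + 2))) 1) *
        oscInt (j / 2) (v ^ 2 - s) (waveAmplitude h s) (2 * π * t) 0 := by
  rw [integral_fun_norm_addHaar volume fun r => sheetKernel h s t (v ^ 2 + r ^ 2),
    finrank_euclideanSpace_fin, ← integral_pow_mul_sheetKernel hh hT, nsmul_eq_mul,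
    smul_eq_mul, ← mul_assoc, Nat.cast_add, Nat.cast_ofNat]
  rfl

end WaveAmplitude

/-! ### Fourier transforms of radial functions -/

section RadialFourier

variable {d : ℕ}

theorem exists_linearIsometryEquiv_inner_eq (x : EuclideanSpace ℝ (Fin (d + 1))) :
    ∃ T : EuclideanSpace ℝ (Fin (d + 1)) ≃ₗᵢ[ℝ] EuclideanSpace ℝ (Fin (d + 1)),
      ∀ ξ, ⟪T ξ, x⟫ = ξ 0 * ‖x‖ := by
  set y : EuclideanSpace ℝ (Fin (d + 1)) := ‖x‖ • EuclideanSpace.single 0 1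
  have hy : ‖y‖ = ‖x‖ := by simp [y, norm_smul]
  set T := (ℝ ∙ (y - x))ᗮ.reflection
  have hT : T y = x := Submodule.reflection_sub hy
  refine ⟨T, fun ξ => ?_⟩
  calc ⟪T ξ, x⟫ = ⟪T ξ, T y⟫ := by rw [hT]
    _ = ⟪ξ, y⟫ := T.inner_map_map ξ y
    _ = ξ 0 * ‖x‖ := by simp [y, inner_smul_right, EuclideanSpace.inner_single_right, mul_comm]

/-- The identification `ℝ^{d+1} = ℝ × ℝ^d` which splits off the first coordinate. -/
def splitFirst (d : ℕ) : EuclideanSpace ℝ (Fin (d + 1)) ≃ᵐ ℝ × EuclideanSpace ℝ (Fin d) :=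
  ((MeasurableEquiv.toLp 2 (Fin (d + 1) → ℝ)).symm.trans
    (MeasurableEquiv.piFinSuccAbove (fun _ => ℝ) 0)).trans
      ((MeasurableEquiv.refl ℝ).prodCongr (MeasurableEquiv.toLp 2 (Fin d → ℝ)))

theorem splitFirst_apply (ξ : EuclideanSpace ℝ (Fin (d + 1))) :
    splitFirst d ξ = (ξ 0, WithLp.toLp 2 fun i => ξ i.succ) := rfl

theorem norm_sq_eq_splitFirst (ξ : EuclideanSpace ℝ (Fin (d + 1))) :
    ‖ξ‖ ^ 2 = (splitFirst d ξ).1 ^ 2 + ‖(splitFirst d ξ).2‖ ^ 2 := by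
  simp [splitFirst_apply, EuclideanSpace.norm_sq_eq, Fin.sum_univ_succ]

theorem measurePreserving_splitFirst (d : ℕ) : MeasurePreserving (splitFirst d) :=
  ((MeasurePreserving.id volume).prod (PiLp.volume_preserving_toLp (Fin d))).comp
    ((volume_preserving_piFinSuccAbove (fun _ => ℝ) 0).comp
      (EuclideanSpace.volume_preserving_symm_measurableEquiv_toLp (Fin (d + 1))))

variable {F : Type*} [NormedAddCommGroup F] [NormedSpace ℂ F] {k : ℝ → F}

theorem integral_fourierChar_inner_smul_radial
    (hk : Integrable fun ξ : EuclideanSpace ℝ (Fin (d + 1)) => k (‖ξ‖ ^ 2))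
    (x : EuclideanSpace ℝ (Fin (d + 1))) :
    ∫ ξ, 𝐞 ⟪ξ, x⟫ • k (‖ξ‖ ^ 2) =
      ∫ v : ℝ, 𝐞 (v * ‖x‖) • ∫ ζ : EuclideanSpace ℝ (Fin d), k (v ^ 2 + ‖ζ‖ ^ 2) := by
  obtain ⟨T, hT⟩ := exists_linearIsometryEquiv_inner_eq x
  have hsplit := (measurePreserving_splitFirst d).integrable_comp_emb
    (splitFirst d).measurableEmbedding
    (g := fun p : ℝ × EuclideanSpace ℝ (Fin d) => k (p.1 ^ 2 + ‖p.2‖ ^ 2))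
  simp only [Function.comp_def, ← norm_sq_eq_splitFirst] at hsplit
  have hprod : Integrable (fun p : ℝ × EuclideanSpace ℝ (Fin d) =>
      𝐞 (p.1 * ‖x‖) • k (p.1 ^ 2 + ‖p.2‖ ^ 2)) (volume.prod volume) :=
    integrable_fourierChar_smul (hsplit.1 hk) (by fun_prop)
  calc ∫ ξ, 𝐞 ⟪ξ, x⟫ • k (‖ξ‖ ^ 2)
      = ∫ ξ, 𝐞 ⟪T ξ, x⟫ • k (‖T ξ‖ ^ 2) :=
        (T.measurePreserving.integral_comp T.toHomeomorph.measurableEmbedding _).symm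
    _ = ∫ ξ, 𝐞 ((splitFirst d ξ).1 * ‖x‖) •
          k ((splitFirst d ξ).1 ^ 2 + ‖(splitFirst d ξ).2‖ ^ 2) := by
        simp only [hT, T.norm_map, norm_sq_eq_splitFirst, splitFirst_apply]
    _ = ∫ p : ℝ × EuclideanSpace ℝ (Fin d), 𝐞 (p.1 * ‖x‖) • k (p.1 ^ 2 + ‖p.2‖ ^ 2) :=
        (measurePreserving_splitFirst d).integral_comp (splitFirst d).measurableEmbedding
          fun p => 𝐞 (p.1 * ‖x‖) • k (p.1 ^ 2 + ‖p.2‖ ^ 2)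
    _ = ∫ v : ℝ, 𝐞 (v * ‖x‖) • ∫ ζ : EuclideanSpace ℝ (Fin d), k (v ^ 2 + ‖ζ‖ ^ 2) := by
        rw [Measure.volume_eq_prod, integral_prod _ hprod]
        simp only [Circle.smul_def, integral_smul]

theorem norm_integral_fourierChar_inner_smul_radial_le
    (hk : Integrable fun ξ : EuclideanSpace ℝ (Fin (d + 1)) => k (‖ξ‖ ^ 2)) {B R : ℝ} (hR : 0 ≤ R)
    (hB : ∀ v ∈ Set.Icc (-R) R, ‖∫ ζ : EuclideanSpace ℝ (Fin d), k (v ^ 2 + ‖ζ‖ ^ 2)‖ ≤ B)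
    (hzero : ∀ v ∉ Set.Icc (-R) R, ∫ ζ : EuclideanSpace ℝ (Fin d), k (v ^ 2 + ‖ζ‖ ^ 2) = 0)
    (x : EuclideanSpace ℝ (Fin (d + 1))) :
    ‖∫ ξ, 𝐞 ⟪ξ, x⟫ • k (‖ξ‖ ^ 2)‖ ≤ B * (2 * R) := by
  rw [integral_fourierChar_inner_smul_radial hk,
    ← setIntegral_eq_integral_of_forall_compl_eq_zero fun v hv => by rw [hzero v hv, smul_zero]]
  refine (norm_setIntegral_le_of_norm_le_const (C := B) (by simp) fun v hv => ?_).trans_eq ?_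
  · rw [Circle.norm_smul]
    exact hB v hv
  · rw [Real.volume_real_Icc_of_le (by linarith)]
    ring

end RadialFourier

/-! ### Decay in time -/

section Decay

variable {h : ℝ → ℝ} {T : ℝ}

theorem isAmplitude_waveAmplitude (hh : ContDiff ℝ (⊤ : ℕ∞) fun u => √u * h u)
    (hT : ∀ u, T < u → h u = 0) {K : Set (ℝ × ℝ)} (hK : ∀ q ∈ K, -T ≤ q.1) :
    IsAmplitude K √(2 * T) fun q : ℝ × ℝ => waveAmplitude h q.1 where
  contDiff := hh.comp
    (by fun_prop : ContDiff ℝ (⊤ : ℕ∞) fun z : (ℝ × ℝ) × ℝ => 2 * z.2 ^ 2 + z.1.1)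
  eq_zero q hq _ hτ := waveAmplitude_eq_zero_of_sqrt_lt_abs hT <|
    (Real.sqrt_le_sqrt (by linarith [hK q hq])).trans_lt hτ

theorem mem_Icc_of_truncRpow_mul_waveAmplitude_ne_zero (hT : ∀ u, T < u → h u = 0)
    {p s v τ : ℝ} (hne : truncRpow p (τ ^ 2 - (v ^ 2 - s)) * waveAmplitude h s τ ≠ 0) :
    s ∈ Set.Icc (-T) T ∧ v ∈ Set.Icc (-√T) √T := by
  have hinside : v ^ 2 - s < τ ^ 2 := by
    by_contra hle
    exact hne (by rw [truncRpow_of_nonpos (by linarith), zero_mul])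
  have hsupp : 2 * τ ^ 2 + s ≤ T := by
    by_contra hlt
    exact hne (by rw [waveAmplitude, hT _ (not_le.1 hlt), mul_zero, mul_zero])
  have hv : v ^ 2 ≤ T := by linarith [sq_nonneg τ]
  exact ⟨⟨by linarith [sq_nonneg v], by linarith [sq_nonneg τ]⟩, abs_le.1 (Real.abs_le_sqrt hv)⟩

theorem oscInt_waveAmplitude_eq_zero (hT : ∀ u, T < u → h u = 0) {s v : ℝ}
    (hsv : ¬(s ∈ Set.Icc (-T) T ∧ v ∈ Set.Icc (-√T) √T)) (p t θ : ℝ) :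
    oscInt p (v ^ 2 - s) (waveAmplitude h s) t θ = 0 :=
  integral_eq_zero_of_ae <| ae_of_all _ fun τ => by
    have hzero : truncRpow p (τ ^ 2 - (v ^ 2 - s)) * waveAmplitude h s τ = 0 :=
      not_imp_comm.1 (mem_Icc_of_truncRpow_mul_waveAmplitude_ne_zero hT) hsv
    simp only [hzero, zero_mul, Pi.zero_apply]

theorem exists_abs_oscInt_waveAmplitude_le (hh : ContDiff ℝ (⊤ : ℕ∞) fun u => √u * h u)
    (hT : ∀ u, T < u → h u = 0) {p : ℝ} (hp : 0 ≤ p) :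
    ∃ C, ∀ s v t, |oscInt p (v ^ 2 - s) (waveAmplitude h s) t 0| ≤ C * (1 + |t|) ^ (-(p + 1)) := by
  set K : Set (ℝ × ℝ) := Set.Icc (-T) T ×ˢ Set.Icc (-√T) √T
  obtain ⟨C, hC⟩ := (isAmplitude_waveAmplitude (K := K) hh hT
    fun q hq => hq.1.1).exists_abs_oscInt_le_one_add_abs (a := fun q => q.2 ^ 2 - q.1)
      (isCompact_Icc.prod isCompact_Icc) (by fun_prop) hp
  refine ⟨max C 0, fun s v t => ?_⟩
  by_cases hsv : s ∈ Set.Icc (-T) T ∧ v ∈ Set.Icc (-√T) √T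
  · exact (hC (s, v) hsv t).trans (by gcongr; exact le_max_left _ _)
  · rw [oscInt_waveAmplitude_eq_zero hT hsv, abs_zero]
    positivity

theorem one_add_abs_two_pi_mul_rpow_le {p : ℝ} (hp : p ≤ 0) (t : ℝ) :
    (1 + |2 * π * t|) ^ p ≤ (1 + |t|) ^ p := by
  refine rpow_le_rpow_of_nonpos (by positivity) ?_ hp
  rw [abs_mul, abs_of_pos Real.two_pi_pos]
  nlinarith [abs_nonneg t, Real.pi_gt_three]

theorem exists_abs_integral_sheetKernel_le (hh : ContDiff ℝ (⊤ : ℕ∞) fun u => √u * h u)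
    (hT : ∀ u, T < u → h u = 0) (j : ℕ) :
    ∃ C, ∀ s v t, |∫ ζ : EuclideanSpace ℝ (Fin (j + 2)), sheetKernel h s t (v ^ 2 + ‖ζ‖ ^ 2)| ≤
      C * (1 + |t|) ^ (-((j : ℝ) / 2 + 1)) := by
  obtain ⟨C, hC⟩ := exists_abs_oscInt_waveAmplitude_le hh hT (p := (j : ℝ) / 2) (by positivity)
  have hC0 : 0 ≤ C := by simpa using (abs_nonneg _).trans (hC 0 0 0)
  refine ⟨(j + 2) * volume.real (Metric.ball (0 : EuclideanSpace ℝ (Fin (j + 2))) 1) * C,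
    fun s v t => ?_⟩
  rw [integral_sheetKernel hh.continuous hT, abs_mul, abs_of_nonneg (by positivity), mul_assoc _ C]
  refine mul_le_mul_of_nonneg_left ?_ (by positivity)
  exact (hC s v (2 * π * t)).trans (mul_le_mul_of_nonneg_left
    (one_add_abs_two_pi_mul_rpow_le (neg_nonpos.2 (by positivity)) t) hC0)

theorem integral_sheetKernel_eq_zero (hh : Continuous fun u => √u * h u)
    (hT : ∀ u, T < u → h u = 0) {v : ℝ} (hv : v ∉ Set.Icc (-√T) √T) (s t : ℝ) (j : ℕ) :
    ∫ ζ : EuclideanSpace ℝ (Fin (j + 2)), sheetKernel h s t (v ^ 2 + ‖ζ‖ ^ 2) = 0 := by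
  rw [integral_sheetKernel hh hT, oscInt_waveAmplitude_eq_zero hT fun hsv => hv hsv.2, mul_zero]

theorem integrable_sheetWeight_norm_sq (hh : Continuous fun u => √u * h u)
    (hT : ∀ u, T < u → h u = 0) (s : ℝ) (j : ℕ) :
    Integrable fun ξ : EuclideanSpace ℝ (Fin (j + 2)) => sheetWeight h s (‖ξ‖ ^ 2) := by
  simpa only [zero_pow two_ne_zero, zero_add] using integrable_sheetWeight hh hT s 0 j

theorem integrable_sheetKernel_norm_sq (hh : Continuous fun u => √u * h u)
    (hT : ∀ u, T < u → h u = 0) (s t : ℝ) (j : ℕ) :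
    Integrable fun ξ : EuclideanSpace ℝ (Fin (j + 2)) => sheetKernel h s t (‖ξ‖ ^ 2) := by
  refine (integrable_sheetWeight_norm_sq hh hT s j).mul_bdd (c := 2) (by fun_prop)
    (ae_of_all _ fun ξ => ?_)
  rw [norm_mul, Real.norm_two, Real.norm_eq_abs]
  linarith [abs_cos_le_one (2 * π * t * √(‖ξ‖ ^ 2 - s))]

theorem exists_norm_integral_fourierChar_smul_sheetKernel_le
    (hh : ContDiff ℝ (⊤ : ℕ∞) fun u => √u * h u) (hT : ∀ u, T < u → h u = 0) (j : ℕ) :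
    ∃ C, ∀ s t (x : EuclideanSpace ℝ (Fin (j + 3))),
      ‖∫ ξ, 𝐞 ⟪ξ, x⟫ • (sheetKernel h s t (‖ξ‖ ^ 2) : ℂ)‖ ≤
        C * (1 + |t|) ^ (-((j : ℝ) / 2 + 1)) := by
  obtain ⟨C, hC⟩ := exists_abs_integral_sheetKernel_le hh hT j
  refine ⟨C * (2 * √T), fun s t x => ?_⟩
  rw [mul_right_comm]
  refine norm_integral_fourierChar_inner_smul_radial_le
    (k := fun u => (sheetKernel h s t u : ℂ))
    (integrable_sheetKernel_norm_sq hh.continuous hT s t (j + 1)).ofReal (Real.sqrt_nonneg T)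
    (fun v _ => ?_) (fun v hv => ?_) x
  · rw [integral_complex_ofReal, Complex.norm_real, Real.norm_eq_abs]
    exact hC s v t
  · rw [integral_complex_ofReal, integral_sheetKernel_eq_zero hh.continuous hT hv,
      Complex.ofReal_zero]

theorem exists_norm_sigmaCheck_spacetimePoint_le (j : ℕ) {η : Spacetime (j + 3) → ℝ}
    (hη : ∀ z z' : Spacetime (j + 3), ‖z‖ = ‖z'‖ → η z = η z')
    (hsmooth : ContDiff ℝ (⊤ : ℕ∞) fun u => √u * radialProfile η u)
    (hT : ∀ u, T < u → radialProfile η u = 0) :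
    ∃ C, ∀ x s t, ‖sigmaCheck η s (spacetimePoint x t)‖ ≤
      C * (1 + |t|) ^ (-((j : ℝ) / 2 + 1)) := by
  obtain ⟨C, hC⟩ := exists_norm_integral_fourierChar_smul_sheetKernel_le hsmooth hT j
  obtain ⟨c, hc⟩ := exists_hausdorffMeasure_eq_smul_volume (j + 3)
  refine ⟨c * C, fun x s t => ?_⟩
  have hint : Integrable (fun ξ : EuclideanSpace ℝ (Fin (j + 3)) =>
      sheetWeight (radialProfile η) s (‖ξ‖ ^ 2)) μH[(j + 3 : ℕ)] := by
    rw [hc]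
    exact (integrable_sheetWeight_norm_sq hsmooth.continuous hT s (j + 1)).smul_measure_nnreal
  rw [sigmaCheck_spacetimePoint_eq hη hint, hc, integral_smul_nnreal_measure, NNReal.smul_def,
    norm_smul, Real.norm_of_nonneg c.coe_nonneg, mul_assoc]
  exact mul_le_mul_of_nonneg_left (hC s t x) c.coe_nonneg

end Decay

section RadialProfile

variable {m : ℕ} {η : Spacetime m → ℝ} {r R : ℝ}

theorem le_and_le_of_radialProfile_ne_zero (hr : 0 < r)
    (hη : ∀ z : Spacetime m, η z ≠ 0 → r ≤ ‖z‖ ∧ ‖z‖ ≤ R) {u : ℝ} (hu : radialProfile η u ≠ 0) :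
    r ^ 2 ≤ u ∧ u ≤ R ^ 2 := by
  obtain ⟨hru, huR⟩ := hη _ hu
  rw [norm_smul, PiLp.norm_single, norm_one, mul_one,
    Real.norm_of_nonneg (Real.sqrt_nonneg u)] at hru huR
  exact ⟨(Real.le_sqrt' hr).1 hru, (Real.sqrt_le_left (hr.le.trans (hru.trans huR))).1 huR⟩

theorem contDiff_sqrt_mul_radialProfile (hηsm : ContDiff ℝ (⊤ : ℕ∞) η) (hr : 0 < r)
    (hη : ∀ u, radialProfile η u ≠ 0 → r ≤ u) :
    ContDiff ℝ (⊤ : ℕ∞) fun u => √u * radialProfile η u := by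
  refine contDiff_iff_contDiffAt.2 fun u => ?_
  rcases lt_or_ge u r with hu | hu
  · refine (contDiffAt_const (c := (0 : ℝ))).congr_of_eventuallyEq ?_
    filter_upwards [Iio_mem_nhds hu] with u' hu'
    rw [not_imp_comm.1 (hη u') (not_le.2 hu'), mul_zero]
  · have hsqrt : ContDiffAt ℝ (⊤ : ℕ∞) Real.sqrt u := Real.contDiffAt_sqrt (hr.trans_le hu).ne'
    exact hsqrt.mul (hηsm.contDiffAt.comp u (hsqrt.smul contDiffAt_const))

end RadialProfile

theorem statement4_general (n m : ℕ) (hn : 4 ≤ n) (hnm : m + 1 = n) (η : Spacetime m → ℝ)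
    (hηsm : ContDiff ℝ (⊤ : ℕ∞) η)
    (hηrad : ∀ z z' : Spacetime m, ‖z‖ = ‖z'‖ → η z = η z') {r R : ℝ} (hr : 0 < r)
    (hηsupp : ∀ z : Spacetime m, η z ≠ 0 → r ≤ ‖z‖ ∧ ‖z‖ ≤ R) :
    ∃ C : ℝ, 0 < C ∧ ∀ (w : Spacetime m) (s : ℝ),
      ‖sigmaCheck η s w‖ ≤ C * (1 + |timeCoord w|) ^ (((2 : ℝ) - n) / 2) := by
  obtain ⟨j, rfl⟩ : ∃ j, m = j + 3 := ⟨m - 3, by omega⟩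
  have hsupp : ∀ u, radialProfile η u ≠ 0 → r ^ 2 ≤ u ∧ u ≤ R ^ 2 :=
    fun u => le_and_le_of_radialProfile_ne_zero hr hηsupp
  obtain ⟨C, hC⟩ := exists_norm_sigmaCheck_spacetimePoint_le j hηrad
    (contDiff_sqrt_mul_radialProfile hηsm (pow_pos hr 2) fun u hu => (hsupp u hu).1)
    fun u hu => not_imp_comm.1 (fun h => (hsupp u h).2) (not_le.2 hu)
  refine ⟨max C 1, by positivity, fun w s => ?_⟩
  obtain ⟨x, hx⟩ := exists_spacetimePoint_eq w
  have hexp : ((2 : ℝ) - n) / 2 = -((j : ℝ) / 2 + 1) := by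
    rw [← hnm]
    push_cast
    ring
  calc ‖sigmaCheck η s w‖ ≤ C * (1 + |timeCoord w|) ^ (-((j : ℝ) / 2 + 1)) :=
        by simpa only [hx] using hC x s (timeCoord w)
    _ ≤ max C 1 * (1 + |timeCoord w|) ^ (((2 : ℝ) - n) / 2) := by
        rw [hexp]
        gcongr
        exact le_max_left _ _

/-- For `n ≥ 5` and any smooth radial bump function `η` supported on
the annulus `{1/4 ≤ ‖z‖ ≤ 5/4}`, there is a constant `C > 0` (depending only on `n`
and `η`) such that for all `(x,t) ∈ ℝ^{n-1} × ℝ` and all `s ∈ (-1/10, 1/10)`,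
`|(σ_s^{(0)})^∨(x,t)| ≤ C (1+|t|)^{(2-n)/2}`. -/
theorem statement4 (n m : ℕ) (hn : 5 ≤ n) (hnm : m + 1 = n)
    (η : Spacetime m → ℝ)
    (hηsm : ContDiff ℝ (⊤ : ℕ∞) η)
    (hηrad : ∀ z z' : Spacetime m, ‖z‖ = ‖z'‖ → η z = η z')
    (hηsupp : ∀ z : Spacetime m, η z ≠ 0 → 1 / 4 ≤ ‖z‖ ∧ ‖z‖ ≤ 5 / 4) :
    ∃ C : ℝ, 0 < C ∧ ∀ (w : Spacetime m) (s : ℝ), s ∈ Set.Ioo (-(1 / 10) : ℝ) (1 / 10) →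
      ‖sigmaCheck η s w‖ ≤ C * (1 + |timeCoord w|) ^ (((2 : ℝ) - n) / 2) := by
  obtain ⟨C, hC0, hC⟩ :=
    statement4_general n m (by omega) hnm η hηsm hηrad (by norm_num) hηsupp
  exact ⟨C, hC0, fun w s _ => hC w s⟩
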